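/- (Özaydin–Volovikov lemma.) Let a be a prime, G = (ℤ/a)^m, and k ≥ 0 an integer. Suppose G acts continuously and without fixed points on a topological space Y and on the sphere S^k, and Y is k-acyclic with ℤ/a coefficients (Y is non-empty and H̃_j(Y; ℤ/a) = 0 for every j ≤ k). Then there does not exist a G-equivariant continuous map Y → S^k. -/

import Mathlib

open CategoryTheory Geometry

/-- The singular chain complex functor with coefficients in a commutative ring `R`,
obtained from the singular simplicial set by applying the free `R`-module functor levelwise
and taking the alternating face map complex. -/
noncomputable def singularChainComplexFunctor (R : Type) [CommRing R] :
    TopCat.{0} ⥤ ChainComplex (ModuleCat R) ℕ :=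
  TopCat.toSSet ⋙ ((SimplicialObject.whiskering _ _).obj (ModuleCat.free R)) ⋙
    AlgebraicTopology.alternatingFaceMapComplex _

/-- Singular homology `H_n(X; R)`. -/
noncomputable def singularHomology (R : Type) [CommRing R] (n : ℕ)
    (X : Type) [TopologicalSpace X] : ModuleCat R :=
  ((singularChainComplexFunctor R).obj (TopCat.of X)).homology n

/-- A space is `n`-acyclic (with `ℤ/a` coefficients) if it is non-empty and its reduced singular
homology with `ℤ/a` coefficients vanishes in all degrees `j ≤ n`; equivalently (over the field
`ℤ/a`), it is non-empty and its unreduced singular homology is isomorphic to that of a point in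
all degrees `j ≤ n`. -/
def IsAcyclicSpace (a : ℕ) (X : Type) [TopologicalSpace X] (n : ℤ) : Prop :=
  Nonempty X ∧ ∀ j : ℕ, (j : ℤ) ≤ n →
    Nonempty ((singularHomology (ZMod a) j X) ≅ (singularHomology (ZMod a) j PUnit))

namespace OV
open Finsupp

section Chains
variable {K : Type} [Field K] {X : Type} {O : Type} [LinearOrder O]

/-- two linear maps agreeing on basis elements of a support set agree on supported chains -/
lemma lin_eq_on {Ω M : Type} [AddCommGroup M] [Module K M] {f g : (Ω →₀ K) →ₗ[K] M} {s : Set Ω}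
    (h : ∀ l ∈ s, f (single l 1) = g (single l 1)) {c : Ω →₀ K}
    (hc : c ∈ Finsupp.supported K K s) : f c = g c := by
  rw [Finsupp.supported_eq_span_single] at hc
  induction hc using Submodule.span_induction with
  | mem x hx => obtain ⟨l, hl, rfl⟩ := hx; exact h l hl
  | zero => simp
  | add x y _ _ hx hy => simp [hx, hy]
  | smul a x _ hx => simp [hx]

lemma lin_mem {Ω M : Type} [AddCommGroup M] [Module K M] {f : (Ω →₀ K) →ₗ[K] M} {s : Set Ω}
    {W : Submodule K M}
    (h : ∀ l ∈ s, f (single l 1) ∈ W) {c : Ω →₀ K}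
    (hc : c ∈ Finsupp.supported K K s) : f c ∈ W := by
  rw [Finsupp.supported_eq_span_single] at hc
  induction hc using Submodule.span_induction with
  | mem x hx => obtain ⟨l, hl, rfl⟩ := hx; exact h l hl
  | zero => simp
  | add x y _ _ hx hy => rw [map_add]; exact W.add_mem hx hy
  | smul a x _ hx => rw [map_smul]; exact W.smul_mem _ hx

/-- linear maps on free modules are determined on the basis -/
lemma lin_ext {Ω M : Type} [AddCommGroup M] [Module K M] {f g : (Ω →₀ K) →ₗ[K] M}
    (h : ∀ l, f (single l 1) = g (single l 1)) : f = g := by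
  ext l; exact h l

variable (K) in
/-- prepend a vertex -/
noncomputable def cone (v : X) : (List X →₀ K) →ₗ[K] (List X →₀ K) :=
  Finsupp.lmapDomain K K (List.cons v)

@[simp] lemma cone_single (v : X) (l : List X) (r : K) :
    cone K v (single l r) = single (v :: l) r := by
  simp [cone]

variable (K) in
/-- boundary of a list -/
noncomputable def bdL : List X → (List X →₀ K)
  | [] => 0
  | v :: l => single l 1 - cone K v (bdL l)

variable (K X) in
/-- boundary -/
noncomputable def bd : (List X →₀ K) →ₗ[K] (List X →₀ K) := Finsupp.linearCombination K (bdL K)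

@[simp] lemma bd_single (l : List X) : bd K X (single l 1) = bdL K l := by
  simp [bd]

lemma bd_cone (v : X) (c : List X →₀ K) : bd K X (cone K v c) = c - cone K v (bd K X c) := by
  have : (bd K X).comp (cone K v) = LinearMap.id - (cone K v).comp (bd K X) := by
    apply lin_ext; intro l; simp [bdL]
  exact LinearMap.congr_fun this c

lemma bd_bdL (l : List X) : bd K X (bdL K l) = 0 := by
  induction l with
  | nil => simp [bdL]
  | cons v l ih => simp [bdL, bd_cone, ih]

lemma bd_bd (c : List X →₀ K) : bd K X (bd K X c) = 0 := by
  have : (bd K X).comp (bd K X) = 0 := by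
    apply lin_ext; intro l; simp [bd_bdL]
  exact LinearMap.congr_fun this c

lemma single_mem_supported {Ω : Type} {s : Set Ω} {l : Ω} (h : l ∈ s) (r : K) :
    single l r ∈ Finsupp.supported K K s :=
  Finsupp.single_mem_supported K r h

lemma cone_mem {v : X} {s t : Set (List X)} (h : ∀ l ∈ s, v :: l ∈ t) {c : List X →₀ K}
    (hc : c ∈ Finsupp.supported K K s) : cone K v c ∈ Finsupp.supported K K t := by
  refine lin_mem (s := s) ?_ hc
  intro l hl
  rw [cone_single]
  exact single_mem_supported (h l hl) _

lemma bdL_mem (l : List X) :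
    bdL K l ∈ Finsupp.supported K K {l' : List X | l'.Sublist l ∧ l'.length + 1 = l.length} := by
  induction l with
  | nil => simp [bdL]
  | cons v l ih =>
    rw [bdL]
    refine Submodule.sub_mem _ (single_mem_supported (by simp) _) (cone_mem ?_ ih)
    intro l' hl'
    simp only [Set.mem_ofPred_eq, List.length_cons] at hl' ⊢
    exact ⟨hl'.1.cons_cons v, by omega⟩

lemma bd_mem {s t : Set (List X)}
    (h : ∀ l ∈ s, ∀ l' : List X, l'.Sublist l → l'.length + 1 = l.length → l' ∈ t)
    {c : List X →₀ K} (hc : c ∈ Finsupp.supported K K s) :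
    bd K X c ∈ Finsupp.supported K K t := by
  refine lin_mem (s := s) ?_ hc
  intro l hl
  rw [bd_single]
  refine Finsupp.supported_mono ?_ (bdL_mem l)
  rintro l' ⟨h1, h2⟩
  exact h l hl l' h1 h2

/-! ### signed insertion -/

variable (K) in
/-- signed insertion of `v` in a sorted list -/
noncomputable def insL (ρ : X → O) (v : X) : List X → (List X →₀ K)
  | [] => single [v] 1
  | w :: s => if ρ v < ρ w then single (v :: w :: s) 1 else
      if ρ v = ρ w then 0 else - cone K w (insL ρ v s)

variable (K) in
noncomputable def ins (ρ : X → O) (v : X) : (List X →₀ K) →ₗ[K] (List X →₀ K) :=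
  Finsupp.linearCombination K (insL K ρ v)

@[simp] lemma ins_single (ρ : X → O) (v : X) (l : List X) :
    ins K ρ v (single l 1) = insL K ρ v l := by
  simp [ins]

lemma insL_of_lt (ρ : X → O) (v : X) (s : List X) (h : ∀ w ∈ s, ρ v < ρ w) :
    insL K ρ v s = single (v :: s) 1 := by
  cases s with
  | nil => rfl
  | cons w s => rw [insL, if_pos (h w (by simp))]

lemma ins_cone_lt (ρ : X → O) {v w : X} (h : ρ v < ρ w) (c : List X →₀ K) :
    ins K ρ v (cone K w c) = cone K v (cone K w c) := by
  have : (ins K ρ v).comp (cone K w) = (cone K v).comp (cone K w) := by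
    apply lin_ext; intro l; simp [insL, h]
  exact LinearMap.congr_fun this c

lemma ins_cone_eq (ρ : X → O) {v w : X} (h : ρ v = ρ w) (c : List X →₀ K) :
    ins K ρ v (cone K w c) = 0 := by
  have : (ins K ρ v).comp (cone K w) = 0 := by
    apply lin_ext; intro l; simp [insL, h]
  exact LinearMap.congr_fun this c

lemma ins_cone_gt (ρ : X → O) {v w : X} (h : ρ w < ρ v) (c : List X →₀ K) :
    ins K ρ v (cone K w c) = - cone K w (ins K ρ v c) := by
  have : (ins K ρ v).comp (cone K w) = - (cone K w).comp (ins K ρ v) := by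
    apply lin_ext; intro l; simp [insL, h.not_gt, h.ne']
  exact LinearMap.congr_fun this c

lemma bd_insL (ρ : X → O) (v : X) (s : List X) (hs : s.Pairwise (fun x y => ρ x < ρ y))
    (hv : ∀ w ∈ s, ρ v = ρ w → v = w) :
    bd K X (insL K ρ v s) = single s 1 - ins K ρ v (bdL K s) := by
  induction s with
  | nil => simp [insL, bdL]
  | cons w s ih =>
    rw [List.pairwise_cons] at hs
    rcases lt_trichotomy (ρ v) (ρ w) with h | h | h
    · have h1 : insL K ρ v s = single (v :: s) 1 :=
        insL_of_lt ρ v s fun x hx => h.trans (hs.1 x hx)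
      rw [insL, if_pos h, bd_single, bdL, bdL, map_sub, map_sub, ins_single, h1, ins_cone_lt ρ h,
        cone_single]
    · have hvw : v = w := hv w (by simp) h
      subst hvw
      have h1 : insL K ρ v s = single (v :: s) 1 := insL_of_lt ρ v s hs.1
      rw [insL, if_neg (lt_irrefl _), if_pos rfl, bdL, map_sub, ins_single, h1, ins_cone_eq ρ rfl]
      simp
    · rw [insL, if_neg h.not_gt, if_neg h.ne', map_neg, bd_cone,
        ih hs.2 (fun x hx => hv x (by simp [hx])), bdL, map_sub, map_sub, ins_single,
        ins_cone_gt ρ h, cone_single]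
      abel

/-- strictly sorted lists with entries in `A` of length `n` -/
def Srt (ρ : X → O) (A : Set X) (n : ℕ) : Set (List X) :=
  {s | s.Pairwise (fun x y => ρ x < ρ y) ∧ (∀ x ∈ s, x ∈ A) ∧ s.length = n}

lemma insL_mem (ρ : X → O) (v : X) (A : Set X) (hvA : v ∈ A) (n : ℕ) (s : List X)
    (hs : s ∈ Srt ρ A n) : insL K ρ v s ∈ Finsupp.supported K K (Srt ρ A (n + 1)) := by
  suffices h : insL K ρ v s ∈ Finsupp.supported K K
      {t | t ∈ Srt ρ A (n + 1) ∧ ∀ x ∈ t, x = v ∨ x ∈ s} by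
    exact Finsupp.supported_mono (fun t ht => ht.1) h
  induction s generalizing n with
  | nil =>
    refine single_mem_supported ?_ _
    simp only [Srt, List.length_nil, Set.mem_ofPred_eq] at hs ⊢
    simp [hvA, hs]
  | cons w s ih =>
    obtain ⟨h1, h2, h3⟩ := hs
    have h1' := h1
    rw [List.pairwise_cons] at h1
    rw [insL]
    split_ifs with ha hb
    · refine single_mem_supported ?_ _
      refine ⟨⟨?_, ?_, ?_⟩, ?_⟩
      · rw [List.pairwise_cons]
        refine ⟨?_, h1'⟩
        intro x hx
        rcases List.mem_cons.1 hx with rfl | hx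
        · exact ha
        · exact ha.trans (h1.1 x hx)
      · intro x hx
        rcases List.mem_cons.1 hx with rfl | hx
        · exact hvA
        · exact h2 x hx
      · simp at h3 ⊢; omega
      · intro x hx
        simpa using hx
    · exact Submodule.zero_mem _
    · refine Submodule.neg_mem _ (cone_mem ?_ (ih s.length ⟨h1.2, fun x hx => h2 x (by simp [hx]), rfl⟩))
      have hlt : ρ w < ρ v := lt_of_le_of_ne (not_lt.1 ha) (Ne.symm hb)
      rintro t ⟨⟨a1, a2, a3⟩, a4⟩
      refine ⟨⟨?_, ?_, ?_⟩, ?_⟩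
      · rw [List.pairwise_cons]
        refine ⟨?_, a1⟩
        intro x hx
        rcases a4 x hx with rfl | hx
        · exact hlt
        · exact h1.1 x hx
      · intro x hx
        rcases List.mem_cons.1 hx with rfl | hx
        · exact h2 _ (by simp)
        · exact a2 x hx
      · simp at h3 ⊢; omega
      · intro x hx
        rcases List.mem_cons.1 hx with rfl | hx
        · simp
        · rcases a4 x hx with h | h <;> simp [h]

variable (K) in
/-- signed sorting -/
noncomputable def SL (ρ : X → O) (π : X → X) : List X → (List X →₀ K)
  | [] => single [] 1
  | v :: l => ins K ρ (π v) (SL ρ π l)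

variable (K) in
noncomputable def SortC (ρ : X → O) (π : X → X) : (List X →₀ K) →ₗ[K] (List X →₀ K) :=
  Finsupp.linearCombination K (SL K ρ π)

@[simp] lemma SortC_single (ρ : X → O) (π : X → X) (l : List X) :
    SortC K ρ π (single l 1) = SL K ρ π l := by
  simp [SortC]

lemma SortC_cone (ρ : X → O) (π : X → X) (v : X) (c : List X →₀ K) :
    SortC K ρ π (cone K v c) = ins K ρ (π v) (SortC K ρ π c) := by
  have : (SortC K ρ π).comp (cone K v) = (ins K ρ (π v)).comp (SortC K ρ π) := by
    apply lin_ext; intro l; simp [SL]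
  exact LinearMap.congr_fun this c

lemma SL_mem (ρ : X → O) (π : X → X) (l : List X) :
    SL K ρ π l ∈ Finsupp.supported K K (Srt ρ {x | x ∈ l.map π} l.length) := by
  induction l with
  | nil => exact single_mem_supported (by simp [Srt]) _
  | cons v l ih =>
    rw [SL]
    refine lin_mem ?_ ih
    intro s hs
    rw [ins_single]
    refine insL_mem ρ (π v) _ (by simp) _ s ⟨hs.1, ?_, hs.2.2⟩
    intro x hx
    have := hs.2.1 x hx
    simp only [Set.mem_ofPred_eq, List.map_cons, List.mem_cons] at this ⊢
    exact Or.inr this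

lemma bd_SL (ρ : X → O) (π : X → X) (l : List X)
    (hl : ∀ x ∈ l, ∀ y ∈ l, ρ (π x) = ρ (π y) → π x = π y) :
    bd K X (SL K ρ π l) = SortC K ρ π (bdL K l) := by
  induction l with
  | nil => simp [SL, bdL]
  | cons v l ih =>
    have key : bd K X (ins K ρ (π v) (SL K ρ π l))
        = SL K ρ π l - ins K ρ (π v) (bd K X (SL K ρ π l)) := by
      refine lin_eq_on (f := (bd K X).comp (ins K ρ (π v)))
        (g := LinearMap.id - (ins K ρ (π v)).comp (bd K X)) ?_ (SL_mem ρ π l)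
      intro s hs
      simp only [LinearMap.comp_apply, LinearMap.sub_apply, LinearMap.id_apply, ins_single,
        bd_single]
      refine bd_insL ρ _ s hs.1 ?_
      intro w hw
      have := hs.2.1 w hw
      simp only [Set.mem_ofPred_eq, List.mem_map] at this
      obtain ⟨y, hy, rfl⟩ := this
      exact hl v (by simp) y (by simp [hy])
    rw [SL, key, ih (fun x hx y hy => hl x (by simp [hx]) y (by simp [hy])), bdL, map_sub,
      SortC_single, SortC_cone]

variable (K) in
noncomputable def hL (ρ : X → O) (π : X → X) : List X → (List X →₀ K)
  | [] => 0
  | v :: l => - cone K v (hL ρ π l) - cone K v (ins K ρ (π v) (SL K ρ π l))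

variable (K) in
noncomputable def Hty (ρ : X → O) (π : X → X) : (List X →₀ K) →ₗ[K] (List X →₀ K) :=
  Finsupp.linearCombination K (hL K ρ π)

@[simp] lemma Hty_single (ρ : X → O) (π : X → X) (l : List X) :
    Hty K ρ π (single l 1) = hL K ρ π l := by
  simp [Hty]

lemma Hty_cone (ρ : X → O) (π : X → X) (v : X) (c : List X →₀ K) :
    Hty K ρ π (cone K v c) =
      - cone K v (Hty K ρ π c) - cone K v (ins K ρ (π v) (SortC K ρ π c)) := by
  have : (Hty K ρ π).comp (cone K v) = - (cone K v).comp (Hty K ρ π) -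
      (cone K v).comp ((ins K ρ (π v)).comp (SortC K ρ π)) := by
    apply lin_ext; intro l; simp [hL]
  exact LinearMap.congr_fun this c

lemma bd_hL (ρ : X → O) (π : X → X) (l : List X)
    (hl : ∀ x ∈ l, ∀ y ∈ l, ρ (π x) = ρ (π y) → π x = π y) :
    bd K X (hL K ρ π l) + Hty K ρ π (bdL K l) = single l 1 - SL K ρ π l := by
  induction l with
  | nil => simp [SL, bdL, hL]
  | cons v l ih =>
    have hl' : ∀ x ∈ l, ∀ y ∈ l, ρ (π x) = ρ (π y) → π x = π y :=
      fun x hx y hy => hl x (by simp [hx]) y (by simp [hy])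
    have ih := ih hl'
    have e1 : bd K X (ins K ρ (π v) (SL K ρ π l))
        = SL K ρ π l - ins K ρ (π v) (SortC K ρ π (bdL K l)) := by
      have := bd_SL (K := K) ρ π (v :: l) hl
      rwa [SL, bdL, map_sub, SortC_single, SortC_cone] at this
    have e2 : bd K X (hL K ρ π l) = single l 1 - SL K ρ π l - Hty K ρ π (bdL K l) := by
      rw [← ih]; abel
    rw [hL, bdL, map_sub, map_neg, bd_cone, bd_cone, e1, e2, SL]
    simp only [map_sub, cone_single, Hty_single, Hty_cone]
    abel

lemma hL_mem (ρ : X → O) (π : X → X) (l : List X) :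
    hL K ρ π l ∈ Finsupp.supported K K
      {s | (∀ x ∈ s, x ∈ l ∨ x ∈ l.map π) ∧ s.length = l.length + 1} := by
  induction l with
  | nil => simp [hL]
  | cons v l ih =>
    rw [hL]
    refine Submodule.sub_mem _ (Submodule.neg_mem _ (cone_mem ?_ ih))
      (cone_mem ?_ (SL_mem ρ π (v :: l)))
    · rintro s ⟨h1, h2⟩
      refine ⟨?_, by simp [h2]⟩
      intro x hx
      rcases List.mem_cons.1 hx with rfl | hx
      · simp
      · rcases h1 x hx with h | h
        · simp [h]
        · rw [List.map_cons]; exact Or.inr (List.mem_cons_of_mem _ h)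
    · rintro s ⟨h0, h1, h2⟩
      refine ⟨?_, by simpa using h2⟩
      intro x hx
      rcases List.mem_cons.1 hx with rfl | hx
      · simp
      · exact Or.inr (h1 x hx)

/-- the sorted chain of a long list with few values vanishes -/
lemma SL_eq_zero (ρ : X → O) (π : X → X) (l : List X) (Q : Finset O)
    (hQ : ∀ x ∈ l, ρ (π x) ∈ Q) (hlen : Q.card < l.length) : SL K ρ π l = 0 := by
  have h := SL_mem (K := K) ρ π l
  have : Srt ρ {x | x ∈ l.map π} l.length = ∅ := by
    rw [Set.eq_empty_iff_forall_notMem]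
    rintro s ⟨h0, h1, h2⟩
    have hnd : (s.map ρ).Nodup := by
      rw [List.Nodup, List.pairwise_map]
      exact h0.imp fun h => h.ne
    have hsub : (s.map ρ).toFinset ⊆ Q := by
      intro o ho
      rw [List.mem_toFinset, List.mem_map] at ho
      obtain ⟨x, hx, rfl⟩ := ho
      have := h1 x hx
      simp only [Set.mem_ofPred_eq, List.mem_map] at this
      obtain ⟨y, hy, rfl⟩ := this
      exact hQ y hy
    have := Finset.card_le_card hsub
    rw [List.toFinset_card_of_nodup hnd, List.length_map] at this
    omega
  rw [this] at h
  simpa using h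

end Chains
end OV

namespace OV

lemma near_int_of_floor_ne {y z η : ℝ} (h : |z - y| < η) (hne : ⌊z⌋ ≠ ⌊y⌋) :
    ∃ p : ℤ, |y - p| < η := by
  rw [abs_lt] at h
  rcases lt_or_gt_of_ne hne with h1 | h1
  · refine ⟨⌊y⌋, ?_⟩
    have h2 : z < ⌊y⌋ := Int.floor_lt.1 h1
    have h3 := Int.floor_le y
    rw [abs_lt]; constructor <;> linarith
  · refine ⟨⌊z⌋, ?_⟩
    have h2 : y < ⌊z⌋ := Int.floor_lt.1 h1
    have h3 := Int.floor_le z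
    rw [abs_lt]; constructor <;> linarith

lemma exists_shift (n : ℕ) (y : Fin n → ℝ) :
    ∃ u : ℝ, 0 ≤ u ∧ u < 1 ∧ ∀ z : Fin n → ℝ, (∀ i, |z i - y i| < 1 / (4 * (n + 1))) →
      ∀ i, ⌊z i + u⌋ = ⌊y i + u⌋ := by
  by_contra hcon
  push Not at hcon
  have hn : (0 : ℝ) < n + 1 := by positivity
  have key : ∀ l : Fin (n + 1), ∃ i : Fin n, ∃ p : ℤ,
      |y i + (l : ℝ) / (n + 1) - p| < 1 / (4 * (n + 1)) := by
    intro l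
    have hl : ((l : ℕ) : ℝ) < n + 1 := by exact_mod_cast l.2
    obtain ⟨z, hz, i, hi⟩ := hcon ((l : ℝ) / (n + 1)) (by positivity) (by rwa [div_lt_one hn])
    refine ⟨i, near_int_of_floor_ne (z := z i + (l : ℝ) / (n + 1)) ?_ hi⟩
    simpa using hz i
  choose I P hP using key
  obtain ⟨l, l', hll, hI⟩ := Fintype.exists_ne_map_eq_of_card_lt I (by simp)
  have h1 := hP l
  have h2 := hP l'
  rw [← hI] at h2
  have h3 : |((l : ℝ) - l') / (n + 1) - (P l - P l' : ℤ)| < 1 / (2 * (n + 1)) := by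
    have e : ((l : ℝ) - l') / (n + 1) - (P l - P l' : ℤ)
      = (y (I l) + (l : ℝ) / (n + 1) - P l) - (y (I l) + (l' : ℝ) / (n + 1) - P l') := by
      push_cast; ring
    have e2 : (1 : ℝ) / (2 * (n + 1)) = 1 / (4 * (n + 1)) + 1 / (4 * (n + 1)) := by
      field_simp; norm_num
    rw [e, e2]
    exact (abs_sub _ _).trans_lt (add_lt_add h1 h2)
  have h4 : |((l : ℝ) - l') - (n + 1) * (P l - P l' : ℤ)| < 1 := by
    have e : ((l : ℝ) - l') - (n + 1) * (P l - P l' : ℤ)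
      = (n + 1) * (((l : ℝ) - l') / (n + 1) - (P l - P l' : ℤ)) := by field_simp
    rw [e, abs_mul, abs_of_pos hn]
    calc (n + 1 : ℝ) * _ < (n + 1) * (1 / (2 * (n + 1))) := by gcongr
      _ = 1 / 2 := by field_simp
      _ < 1 := by norm_num
  have h5 : ((l : ℕ) : ℤ) - (l' : ℕ) - (n + 1) * (P l - P l') = 0 := by
    rw [← Int.abs_lt_one_iff]; exact_mod_cast h4
  have b1 := l.2
  have b2 := l'.2
  apply hll
  ext
  have : P l - P l' = 0 := by
    rcases lt_trichotomy (P l - P l') 0 with h | h | h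
    · nlinarith
    · exact h
    · nlinarith
  rw [this] at h5
  omega

lemma few_floors (k : ℕ) (x : Fin (k + 1) → ℝ) (i0 : Fin (k + 1)) (c : ℤ) (hc : x i0 = c) :
    ∃ S : Finset (Fin (k + 1) → ℤ), S.card ≤ k + 1 ∧
      ∀ u : ℝ, 0 ≤ u → u < 1 → (fun i => ⌊x i + u⌋) ∈ S := by
  set V : Set (Fin (k + 1) → ℤ) := {v | ∃ u : ℝ, 0 ≤ u ∧ u < 1 ∧ v = fun i => ⌊x i + u⌋} with hV
  let f : (Fin (k + 1) → ℤ) → ℤ := fun v => ∑ i, (v i - ⌊x i⌋)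
  have hb : ∀ u : ℝ, 0 ≤ u → u < 1 → ∀ i, 0 ≤ ⌊x i + u⌋ - ⌊x i⌋ ∧ ⌊x i + u⌋ - ⌊x i⌋ ≤ 1 := by
    intro u h0 h1 i
    have a1 : ⌊x i⌋ ≤ ⌊x i + u⌋ := Int.floor_mono (by linarith)
    have a2 : ⌊x i + u⌋ ≤ ⌊x i + 1⌋ := Int.floor_mono (by linarith)
    rw [Int.floor_add_one] at a2
    omega
  have hmaps : Set.MapsTo f V (Set.Icc 0 (k : ℤ)) := by
    rintro v ⟨u, h0, h1, rfl⟩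
    refine ⟨Finset.sum_nonneg fun i _ => (hb u h0 h1 i).1, ?_⟩
    show ∑ i, (⌊x i + u⌋ - ⌊x i⌋) ≤ k
    rw [← Finset.add_sum_erase _ _ (Finset.mem_univ i0)]
    have e0 : ⌊x i0 + u⌋ - ⌊x i0⌋ = 0 := by
      have : ⌊u⌋ = 0 := Int.floor_eq_zero_iff.2 ⟨h0, h1⟩
      rw [hc, Int.floor_intCast_add, Int.floor_intCast, this]; ring
    rw [e0, zero_add]
    calc _ ≤ ∑ i ∈ Finset.univ.erase i0, (1 : ℤ) := Finset.sum_le_sum fun i _ => (hb u h0 h1 i).2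
      _ = k := by simp
  have hinj : Set.InjOn f V := by
    have aux : ∀ u u' : ℝ, u ≤ u' → f (fun i => ⌊x i + u⌋) = f (fun i => ⌊x i + u'⌋) →
        (fun i => ⌊x i + u⌋) = (fun i => ⌊x i + u'⌋) := by
      intro u u' huu h
      have hle : ∀ i ∈ Finset.univ, ⌊x i + u⌋ - ⌊x i⌋ ≤ ⌊x i + u'⌋ - ⌊x i⌋ := by
        intro i _
        have : ⌊x i + u⌋ ≤ ⌊x i + u'⌋ := Int.floor_mono (by linarith)
        omega
      have := (Finset.sum_eq_sum_iff_of_le hle).1 h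
      ext i
      have := this i (Finset.mem_univ i)
      omega
    rintro v ⟨u, -, -, rfl⟩ v' ⟨u', -, -, rfl⟩ h
    rcases le_total u u' with huu | huu
    · exact aux u u' huu h
    · exact (aux u' u huu h.symm).symm
  have hfin : V.Finite := Set.Finite.of_injOn hmaps hinj (Set.finite_Icc _ _)
  refine ⟨hfin.toFinset, ?_, ?_⟩
  · have h1 : hfin.toFinset.card ≤ (Finset.Icc 0 (k : ℤ)).card := by
      apply Finset.card_le_card_of_injOn f
      · intro v hv
        have := hmaps (by simpa using hv)
        simpa using this
      · simpa using hinj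
    simpa using h1
  · intro u h0 h1
    simp only [Set.Finite.mem_toFinset]
    exact ⟨u, h0, h1, rfl⟩

lemma cube_approx (k N : ℕ) (hN : 0 < N) :
    ∃ π : Metric.sphere (0 : Fin (k + 1) → ℝ) 1 → Metric.sphere (0 : Fin (k + 1) → ℝ) 1,
      (∀ q, dist (π q) q ≤ 1 / N) ∧ ∃ η > 0, ∀ x, ∃ S : Finset (Metric.sphere (0 : Fin (k + 1) → ℝ) 1),
        S.card ≤ k + 1 ∧ ∀ y, dist y x < η → π y ∈ S := by
  classical
  have hN' : (0 : ℝ) < N := by exact_mod_cast hN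
  have hle : ∀ q : Metric.sphere (0 : Fin (k + 1) → ℝ) 1, ∀ i, |q.1 i| ≤ 1 := by
    intro q i
    have h := norm_le_pi_norm q.1 i
    rw [mem_sphere_zero_iff_norm.1 q.2] at h
    exact h
  have hex : ∀ q : Metric.sphere (0 : Fin (k + 1) → ℝ) 1, ∃ i, |q.1 i| = 1 := by
    intro q
    by_contra hcon
    push Not at hcon
    have : ‖q.1‖ < 1 := by
      rw [pi_norm_lt_iff one_pos]
      intro i
      exact lt_of_le_of_ne (hle q i) (hcon i)
    rw [mem_sphere_zero_iff_norm.1 q.2] at this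
    exact lt_irrefl _ this
  have hcoord : ∀ q : Metric.sphere (0 : Fin (k + 1) → ℝ) 1, ∃ i, ∃ c : ℤ, N * q.1 i = c ∧ |(c : ℝ)| = N := by
    intro q
    obtain ⟨i, hi⟩ := hex q
    rcases abs_eq (zero_le_one) |>.1 hi with h | h
    · exact ⟨i, N, by simp [h], by simp⟩
    · exact ⟨i, -N, by simp [h], by simp⟩
  choose u hu0 hu1 hu using fun q : Metric.sphere (0 : Fin (k + 1) → ℝ) 1 =>
    exists_shift (k + 1) (fun i => N * q.1 i)
  let mk : (Fin (k + 1) → ℤ) → (Fin (k + 1) → ℝ) := fun v i => (v i : ℝ) / N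
  have hmem : ∀ q, mk (fun i => ⌊N * q.1 i + u q⌋) ∈ Metric.sphere (0 : Fin (k + 1) → ℝ) 1 := by
    intro q
    rw [mem_sphere_zero_iff_norm]
    apply le_antisymm
    · rw [pi_norm_le_iff_of_nonneg zero_le_one]
      intro i
      show |(⌊N * q.1 i + u q⌋ : ℝ) / N| ≤ 1
      rw [abs_div, abs_of_pos hN', div_le_one hN']
      have h := abs_le.1 (hle q i)
      have h1 : ⌊N * q.1 i + u q⌋ < (N : ℤ) + 1 := by
        rw [Int.floor_lt]; push_cast; nlinarith [hu1 q]
      have h2 : -(N : ℤ) ≤ ⌊N * q.1 i + u q⌋ := by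
        rw [Int.le_floor]; push_cast; nlinarith [hu0 q]
      rw [abs_le]
      constructor
      · exact_mod_cast h2
      · exact_mod_cast Int.lt_add_one_iff.1 h1
    · obtain ⟨i, c, hc, hcN⟩ := hcoord q
      have h := norm_le_pi_norm (mk (fun i => ⌊N * q.1 i + u q⌋)) i
      have e : mk (fun i => ⌊N * q.1 i + u q⌋) i = c / N := by
        have h0 : ⌊u q⌋ = 0 := Int.floor_eq_zero_iff.2 ⟨hu0 q, hu1 q⟩
        show ((⌊N * q.1 i + u q⌋ : ℤ) : ℝ) / N = _
        rw [hc, Int.floor_intCast_add, h0]; simp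
      rw [e, Real.norm_eq_abs, abs_div, hcN, abs_of_pos hN', div_self hN'.ne'] at h
      exact h
  refine ⟨fun q => ⟨_, hmem q⟩, ?_, 1 / (4 * ((k + 1 : ℕ) + 1)) / N, by positivity, ?_⟩
  · intro q
    rw [Subtype.dist_eq, dist_pi_le_iff (by positivity)]
    intro i
    show |(⌊N * q.1 i + u q⌋ : ℝ) / N - q.1 i| ≤ 1 / N
    have e : (⌊N * q.1 i + u q⌋ : ℝ) / N - q.1 i = (⌊N * q.1 i + u q⌋ - N * q.1 i) / N := by
      field_simp
    rw [e, abs_div, abs_of_pos hN']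
    gcongr
    have h1 := Int.floor_le (N * q.1 i + u q)
    have h2 := Int.lt_floor_add_one (N * q.1 i + u q)
    rw [abs_le]
    constructor <;> linarith [hu0 q, hu1 q]
  · intro x
    obtain ⟨i0, c, hc, -⟩ := hcoord x
    obtain ⟨S, hS, hSm⟩ := few_floors k (fun i => N * x.1 i) i0 c hc
    refine ⟨(S.image mk).subtype (· ∈ Metric.sphere (0 : Fin (k + 1) → ℝ) 1), ?_, ?_⟩
    · rw [Finset.card_subtype]
      exact (Finset.card_filter_le _ _).trans (Finset.card_image_le.trans hS)
    · intro y hy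
      rw [Finset.mem_subtype, Finset.mem_image]
      refine ⟨_, hSm (u y) (hu0 y) (hu1 y), ?_⟩
      have : (fun i => ⌊N * x.1 i + u y⌋) = fun i => ⌊N * y.1 i + u y⌋ := by
        ext i
        refine hu y (fun i => N * x.1 i) ?_ i
        intro i
        rw [← mul_sub, abs_mul, abs_of_pos hN']
        have h1 : |x.1 i - y.1 i| ≤ dist y x := by
          rw [dist_comm, Subtype.dist_eq, ← Real.dist_eq]; exact dist_le_pi_dist _ _ i
        rw [← lt_div_iff₀' hN']
        exact h1.trans_lt hy
      rw [this]

lemma sphere_approx (k : ℕ) (ε : ℝ) (hε : 0 < ε) :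
    ∃ π : Metric.sphere (0 : EuclideanSpace ℝ (Fin (k + 1))) 1 →
        Metric.sphere (0 : EuclideanSpace ℝ (Fin (k + 1))) 1,
      (∀ q, dist (π q) q < ε) ∧ ∃ η > 0, ∀ x,
        ∃ S : Finset (Metric.sphere (0 : EuclideanSpace ℝ (Fin (k + 1))) 1),
        S.card ≤ k + 1 ∧ ∀ y, dist y x < η → π y ∈ S := by
  classical
  have hx0 : ∀ x : Metric.sphere (0 : EuclideanSpace ℝ (Fin (k + 1))) 1, ‖WithLp.ofLp x.1‖ ≠ 0 := by
    intro x h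
    rw [norm_eq_zero] at h
    have h1 := mem_sphere_zero_iff_norm.1 x.2
    have : x.1 = 0 := by
      ext i; exact congrFun h i
    rw [this] at h1; simp at h1
  have hq0 : ∀ x : Metric.sphere (0 : Fin (k + 1) → ℝ) 1, ‖(WithLp.toLp 2 x.1 : EuclideanSpace ℝ (Fin (k + 1)))‖ ≠ 0 := by
    intro x h
    rw [norm_eq_zero] at h
    have h1 := mem_sphere_zero_iff_norm.1 x.2
    have : x.1 = 0 := by
      ext i
      have := congrArg (fun v : EuclideanSpace ℝ (Fin (k + 1)) => v i) h
      simpa using this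
    rw [this] at h1; simp at h1
  let f : Metric.sphere (0 : EuclideanSpace ℝ (Fin (k + 1))) 1 → Metric.sphere (0 : Fin (k + 1) → ℝ) 1 :=
    fun x => ⟨(‖WithLp.ofLp x.1‖)⁻¹ • WithLp.ofLp x.1, by
      rw [mem_sphere_zero_iff_norm, norm_smul, norm_inv, norm_norm, inv_mul_cancel₀ (hx0 x)]⟩
  let g : Metric.sphere (0 : Fin (k + 1) → ℝ) 1 → Metric.sphere (0 : EuclideanSpace ℝ (Fin (k + 1))) 1 :=
    fun x => ⟨(‖(WithLp.toLp 2 x.1 : EuclideanSpace ℝ (Fin (k + 1)))‖)⁻¹ • WithLp.toLp 2 x.1, by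
      rw [mem_sphere_zero_iff_norm, norm_smul, norm_inv, norm_norm, inv_mul_cancel₀ (hq0 x)]⟩
  have hgf : ∀ x, g (f x) = x := by
    intro x
    ext1
    have h1 := mem_sphere_zero_iff_norm.1 x.2
    have h2 := hx0 x
    show (‖WithLp.toLp 2 ((‖WithLp.ofLp x.1‖)⁻¹ • WithLp.ofLp x.1)‖)⁻¹ • WithLp.toLp 2 ((‖WithLp.ofLp x.1‖)⁻¹ • WithLp.ofLp x.1) = x.1
    rw [WithLp.toLp_smul, norm_smul, WithLp.toLp_ofLp, h1, smul_smul, norm_inv, norm_norm]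
    rw [mul_one, inv_inv, mul_inv_cancel₀ h2, one_smul]
  have hf : Continuous f := by
    have hc : Continuous fun x : Metric.sphere (0 : EuclideanSpace ℝ (Fin (k + 1))) 1 => WithLp.ofLp x.1 :=
      (PiLp.continuous_ofLp 2 _).comp continuous_subtype_val
    exact ((hc.norm.inv₀ hx0).smul hc).subtype_mk _
  have hg : Continuous g := by
    have hc : Continuous fun x : Metric.sphere (0 : Fin (k + 1) → ℝ) 1 => (WithLp.toLp 2 x.1 : EuclideanSpace ℝ (Fin (k + 1))) :=
      (PiLp.continuous_toLp 2 _).comp continuous_subtype_val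
    exact ((hc.norm.inv₀ hq0).smul hc).subtype_mk _
  have : CompactSpace (Metric.sphere (0 : EuclideanSpace ℝ (Fin (k + 1))) 1) :=
    isCompact_iff_compactSpace.1 (isCompact_sphere _ _)
  have : CompactSpace (Metric.sphere (0 : Fin (k + 1) → ℝ) 1) :=
    isCompact_iff_compactSpace.1 (isCompact_sphere _ _)
  have hfu := Metric.uniformContinuous_iff.1 (CompactSpace.uniformContinuous_of_continuous hf)
  have hgu := Metric.uniformContinuous_iff.1 (CompactSpace.uniformContinuous_of_continuous hg)
  obtain ⟨δ, hδ, hgδ⟩ := hgu ε hε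
  obtain ⟨N, hN⟩ := exists_nat_one_div_lt hδ
  obtain ⟨π, h1, η, hη, h2⟩ := cube_approx k (N + 1) (Nat.succ_pos _)
  obtain ⟨δ', hδ', hfδ⟩ := hfu η hη
  refine ⟨fun x => g (π (f x)), ?_, δ', hδ', ?_⟩
  · intro q
    have h3 : dist (π (f q)) (f q) < δ := (h1 _).trans_lt (by exact_mod_cast hN)
    have h4 := hgδ h3
    rwa [hgf] at h4
  · intro x
    obtain ⟨S, hS, hSm⟩ := h2 (f x)
    refine ⟨S.image g, Finset.card_image_le.trans hS, ?_⟩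
    intro y hy
    exact Finset.mem_image_of_mem _ (hSm _ (hfδ hy))
end OV

set_option linter.unusedSectionVars false
namespace OV
open Finsupp

section Alg
variable {K : Type} [Field K]

/-- permutation representation attached to an action -/
noncomputable def permRep (K : Type) [Field K] {Γ Ω : Type} [Monoid Γ] (A : Γ →* Function.End Ω) :
    Representation K Γ (Ω →₀ K) where
  toFun g := Finsupp.lmapDomain K K (A g)
  map_one' := by
    apply lin_ext; intro l
    rw [map_one]
    exact Finsupp.mapDomain_single
  map_mul' g h := by
    apply lin_ext; intro l
    rw [map_mul]
    refine Finsupp.mapDomain_single.trans ?_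
    change _ = Finsupp.mapDomain (A g) (Finsupp.mapDomain (A h) (single l 1))
    exact ((congrArg (Finsupp.mapDomain (A g)) Finsupp.mapDomain_single).trans
      Finsupp.mapDomain_single).symm

@[simp] lemma permRep_single {Γ Ω : Type} [Monoid Γ] (A : Γ →* Function.End Ω) (g : Γ) (l : Ω)
    (r : K) : permRep K A g (single l r) = single (A g l) r := by
  exact Finsupp.mapDomain_single

lemma intertwine {Γ V V' : Type} [Monoid Γ] [AddCommGroup V] [Module K V] [AddCommGroup V']
    [Module K V'] (ρ : Representation K Γ V) (ρ' : Representation K Γ V') (f : V →ₗ[K] V')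
    (h : ∀ g v, f (ρ g v) = ρ' g (f v)) (b : MonoidAlgebra K Γ) (v : V) :
    f (ρ.asAlgebraHom b v) = ρ'.asAlgebraHom b (f v) := by
  induction b using MonoidAlgebra.induction_on with
  | of g => simp [h, Representation.asAlgebraHom_of]
  | add x y hx hy => simp [hx, hy]
  | smul r x hx => simp [hx]

lemma asAlg_mem {Γ V : Type} [Monoid Γ] [AddCommGroup V] [Module K V]
    (ρ : Representation K Γ V) (W : Submodule K V) (h : ∀ g, ∀ v ∈ W, ρ g v ∈ W)
    (b : MonoidAlgebra K Γ) {v : V} (hv : v ∈ W) :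
    ρ.asAlgebraHom b v ∈ W := by
  induction b using MonoidAlgebra.induction_on with
  | of g => simpa [Representation.asAlgebraHom_of] using h g v hv
  | add x y hx hy => simpa using W.add_mem hx hy
  | smul r x hx => simpa using W.smul_mem _ hx

lemma permRep_mem {Γ Ω : Type} [Monoid Γ] (A : Γ →* Function.End Ω) {s : Set Ω}
    (h : ∀ g, ∀ l ∈ s, A g l ∈ s) (b : MonoidAlgebra K Γ) {v : Ω →₀ K}
    (hv : v ∈ Finsupp.supported K K s) :
    (permRep K A).asAlgebraHom b v ∈ Finsupp.supported K K s := by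
  refine asAlg_mem _ _ ?_ b hv
  intro g v hv
  refine lin_mem ?_ hv
  intro l hl
  rw [permRep_single]
  exact single_mem_supported (h g l hl) _

lemma free_abs {V : Type} [AddCommGroup V] [Module K V] (a : ℕ) [Fact a.Prime] [CharP K a]
    (x D : Module.End K V) (W : Submodule K V) (hxW : ∀ v ∈ W, x v ∈ W) (hDW : ∀ v ∈ W, D v ∈ W)
    (hD : ∀ v ∈ W, D (x v) = x (D v) + v) (n : ℕ) (hn : n < a) (v : V) (hv : v ∈ W)
    (h : (x ^ n) v = 0) : ∃ w ∈ W, v = x w := by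
  have hpow : ∀ n, ∀ v ∈ W, (x ^ n) v ∈ W := by
    intro n
    induction n with
    | zero => intro v hv; simpa using hv
    | succ n ih => intro v hv; rw [pow_succ']; exact hxW _ (ih v hv)
  have hcomm : ∀ n : ℕ, ∀ v ∈ W, D ((x ^ (n + 1)) v) = (x ^ (n + 1)) (D v) + (n + 1 : K) • (x ^ n) v := by
    intro n
    induction n with
    | zero => intro v hv; simp [hD v hv]
    | succ n ih =>
      intro v hv
      have e : (x ^ (n + 1 + 1)) v = x ((x ^ (n + 1)) v) := by rw [pow_succ' x (n + 1)]; rfl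
      rw [e, hD _ (hpow _ v hv), ih v hv, map_add, map_smul]
      have e1 : x ((x ^ (n + 1)) (D v)) = (x ^ (n + 1 + 1)) (D v) := by
        rw [pow_succ' x (n + 1)]; rfl
      have e2 : x ((x ^ n) v) = (x ^ (n + 1)) v := by rw [pow_succ' x n]; rfl
      rw [e1, e2]
      push_cast
      rw [add_smul (n + 1 : K) 1, one_smul]
      abel
  induction n generalizing v with
  | zero => exact ⟨0, W.zero_mem, by simpa using h⟩
  | succ n ih =>
    have h1 := hcomm n v hv
    rw [h, map_zero] at h1
    have h2 : (x ^ n) (x (D v) + (n + 1 : K) • v) = 0 := by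
      rw [map_add, map_smul, h1, pow_succ]; rfl
    obtain ⟨w, hw, hw'⟩ := ih (by omega) _
      (W.add_mem (hxW _ (hDW v hv)) (W.smul_mem _ hv)) h2
    have hne : (n + 1 : K) ≠ 0 := by
      intro h0
      have h0' : ((n + 1 : ℕ) : K) = 0 := by exact_mod_cast h0
      rw [CharP.cast_eq_zero_iff K a] at h0'
      exact absurd (Nat.le_of_dvd (Nat.succ_pos _) h0') (by omega)
    refine ⟨(n + 1 : K)⁻¹ • (w - D v), W.smul_mem _ (W.sub_mem hw (hDW v hv)), ?_⟩
    rw [map_smul, map_sub, ← hw', add_sub_cancel_left, smul_smul, inv_mul_cancel₀ hne, one_smul]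

lemma free_pow {V : Type} [AddCommGroup V] [Module K V] (a : ℕ) [Fact a.Prime] [CharP K a]
    (x D : Module.End K V) (W : Submodule K V) (hxW : ∀ v ∈ W, x v ∈ W) (hDW : ∀ v ∈ W, D v ∈ W)
    (hD : ∀ v ∈ W, D (x v) = x (D v) + v) (d p : ℕ) (hpd : p + d = a) (v : V) (hv : v ∈ W)
    (h : (x ^ p) v = 0) : ∃ w ∈ W, v = (x ^ d) w := by
  induction d generalizing p v with
  | zero => exact ⟨v, hv, by simp⟩
  | succ d ih =>
    obtain ⟨w, hw, rfl⟩ := free_abs a x D W hxW hDW hD p (by omega) v hv h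
    obtain ⟨w', hw', rfl⟩ := ih (p + 1) (by omega) w hw (by rw [pow_succ]; exact h)
    exact ⟨w', hw', by rw [pow_succ' x d]; rfl⟩

end Alg

section Alg2
variable {K : Type} [Field K]
variable {a m : ℕ} [Fact a.Prime] [CharP K a] [Algebra (ZMod a) K]

/-- the elementary abelian group -/
abbrev Gam (a m : ℕ) := Multiplicative (Fin m → ZMod a)

/-- generators -/
def gen (a : ℕ) {m : ℕ} (i : Fin m) : Gam a m := Multiplicative.ofAdd (Pi.single i 1)

lemma gen_pow (g : Gam a m) : g ^ a = 1 := by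
  apply Multiplicative.toAdd.injective
  rw [toAdd_pow, toAdd_one]
  ext i
  simp

/-- generic nilpotent element -/
noncomputable def xel (a : ℕ) {m : ℕ} (α : Fin m → K) : MonoidAlgebra K (Gam a m) :=
  ∑ i, (MonoidAlgebra.single (gen a i) (α i) - MonoidAlgebra.single 1 (α i))

noncomputable def uel (α : Fin m → K) (χ : (Fin m → ZMod a) →ₗ[ZMod a] ZMod a) :
    MonoidAlgebra K (Gam a m) :=
  ∑ i, MonoidAlgebra.single (gen a i) (α i * algebraMap (ZMod a) K (χ (Pi.single i 1)))

lemma charP_B : CharP (MonoidAlgebra K (Gam a m)) a :=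
  charP_of_injective_algebraMap (R := K) (A := MonoidAlgebra K (Gam a m)) (RingHom.injective _) a

lemma xel_pow (α : Fin m → K) : (xel a α) ^ a = 0 := by
  have := charP_B (K := K) (a := a) (m := m)
  rw [xel, sum_pow_char a]
  apply Finset.sum_eq_zero
  intro i _
  rw [sub_pow_char, MonoidAlgebra.single_pow, MonoidAlgebra.single_pow, gen_pow, one_pow, sub_self]

lemma uel_pow (α : Fin m → K) (χ : (Fin m → ZMod a) →ₗ[ZMod a] ZMod a) :
    (uel α χ) ^ a = algebraMap K _ ((∑ i, α i * algebraMap (ZMod a) K (χ (Pi.single i 1))) ^ a) := by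
  have := charP_B (K := K) (a := a) (m := m)
  rw [uel, sum_pow_char a, sum_pow_char a, map_sum]
  refine Finset.sum_congr rfl fun i _ => ?_
  rw [MonoidAlgebra.single_pow, gen_pow]
  rfl

lemma uel_unit (α : Fin m → K) (hα : LinearIndependent (ZMod a) α)
    (χ : (Fin m → ZMod a) →ₗ[ZMod a] ZMod a) (hχ : χ ≠ 0) : IsUnit (uel α χ) := by
  have hs : (∑ i, α i * algebraMap (ZMod a) K (χ (Pi.single i 1))) ≠ 0 := by
    intro h0
    rw [Fintype.linearIndependent_iff] at hα
    have h1 := hα (fun i => χ (Pi.single i 1)) (by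
      rw [← h0]; refine Finset.sum_congr rfl fun i _ => ?_
      rw [Algebra.smul_def, mul_comm])
    apply hχ
    apply LinearMap.pi_ext'
    intro i
    ext
    simpa using h1 i
  have : IsUnit ((uel α χ) ^ a) := by
    rw [uel_pow]
    exact (IsUnit.mk0 _ (pow_ne_zero _ hs)).map _
  exact (isUnit_pow_iff (Fact.out : a.Prime).ne_zero).1 this

/-- action on lists -/
def listAct (Γ Z : Type) [Monoid Γ] [MulAction Γ Z] : Γ →* Function.End (List Z) where
  toFun g := List.map (g • ·)
  map_one' := by
    funext l
    change List.map _ l = l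
    simp
  map_mul' g h := by
    funext l
    change List.map _ l = List.map _ (List.map _ l)
    simp [mul_smul]

lemma listAct_cons {Γ Z : Type} [Monoid Γ] [MulAction Γ Z] (g : Γ) (v : Z) (l : List Z) :
    listAct Γ Z g (v :: l) = (g • v) :: listAct Γ Z g l := rfl

lemma listAct_nil {Γ Z : Type} [Monoid Γ] [MulAction Γ Z] (g : Γ) :
    listAct Γ Z g [] = [] := rfl

lemma listAct_length {Γ Z : Type} [Monoid Γ] [MulAction Γ Z] (g : Γ) (l : List Z) :
    (listAct Γ Z g l).length = l.length := List.length_map _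

/-- homogeneous chains -/
abbrev Hom' (K Z : Type) [Field K] (n : ℕ) : Submodule K (List Z →₀ K) :=
  Finsupp.supported K K {l : List Z | l.length = n}

lemma cone_equiv {Γ Z : Type} [Monoid Γ] [MulAction Γ Z] (g : Γ) (v : Z) (c : List Z →₀ K) :
    permRep K (listAct Γ Z) g (cone K v c) = cone K (g • v) (permRep K (listAct Γ Z) g c) := by
  have : (permRep K (listAct Γ Z) g).comp (cone K v) =
      (cone K (g • v)).comp (permRep K (listAct Γ Z) g) := by
    apply lin_ext; intro l; simp [listAct_cons]
  exact LinearMap.congr_fun this c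

lemma bd_equiv {Γ Z : Type} [Monoid Γ] [MulAction Γ Z] (g : Γ) (c : List Z →₀ K) :
    bd K Z (permRep K (listAct Γ Z) g c) = permRep K (listAct Γ Z) g (bd K Z c) := by
  have : (bd K Z).comp (permRep K (listAct Γ Z) g) = (permRep K (listAct Γ Z) g).comp (bd K Z) := by
    apply lin_ext; intro l
    simp only [LinearMap.comp_apply, permRep_single, bd_single]
    induction l with
    | nil => simp [listAct_nil, bdL]
    | cons v l ih => simp [listAct_cons, bdL, ih, cone_equiv]
  exact LinearMap.congr_fun this c

/-- alternating exponents -/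
def ex (a j : ℕ) : ℕ := if Even j then 1 else a - 1

lemma ex_add (j : ℕ) : ex a j + ex a (j + 1) = a := by
  have := (Fact.out : a.Prime).two_le
  unfold ex
  by_cases hj : Even j
  · have : ¬ Even (j + 1) := by simpa [Nat.even_add_one] using hj
    rw [if_pos hj, if_neg this]; omega
  · have : Even (j + 1) := by simpa [Nat.even_add_one] using hj
    rw [if_neg hj, if_pos this]; omega

lemma ex_pos (j : ℕ) : 0 < ex a j := by
  have := (Fact.out : a.Prime).two_le
  unfold ex
  split_ifs <;> omega

lemma ex_add_two (j : ℕ) : ex a (j + 2) = ex a j := by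
  unfold ex
  simp [Nat.even_add]

/-- powers of the generic element annihilate the coefficient of the empty list -/
lemma xel_nil {Z : Type} [MulAction (Gam a m) Z] (α : Fin m → K) (c : List Z →₀ K) :
    ((permRep K (listAct (Gam a m) Z)).asAlgebraHom (xel a α) c) [] = 0 := by
  have h1 : ∀ (g : Gam a m), ((permRep K (listAct (Gam a m) Z)) g c) [] = c [] := by
    intro g
    have : (Finsupp.lapply (R := K) ([] : List Z)).comp ((permRep K (listAct (Gam a m) Z)) g) =
        (Finsupp.lapply (R := K) ([] : List Z)) := by
      apply lin_ext; intro l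
      cases l <;> simp [listAct_nil, listAct_cons]
    exact LinearMap.congr_fun this c
  rw [xel]
  simp only [map_sum, map_sub, Representation.asAlgebraHom_single, LinearMap.sum_apply,
    LinearMap.sub_apply, LinearMap.smul_apply, Finsupp.coe_finsetSum, Finset.sum_apply,
    Finsupp.sub_apply, Finsupp.smul_apply, h1, sub_self, Finset.sum_const_zero]

end Alg2
end OV

set_option linter.unusedSectionVars false
namespace OV
open Finsupp

section DD
variable {K : Type} [Field K]
variable {a m : ℕ} [Fact a.Prime] [CharP K a] [Algebra (ZMod a) K]
variable {Z : Type} [MulAction (Gam a m) Z]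

/-- action of the group algebra on chains of lists -/
noncomputable abbrev act (K Z : Type) [Field K] {a m : ℕ} [MulAction (Gam a m) Z]
    (b : MonoidAlgebra K (Gam a m)) : Module.End K (List Z →₀ K) :=
  (permRep K (listAct (Gam a m) Z)).asAlgebraHom b

/-- derivation-like operator on generators -/
noncomputable def DL (α : Fin m → K) (χ : Z → ((Fin m → ZMod a) →ₗ[ZMod a] ZMod a))
    (c : Z → ZMod a) : List Z → (List Z →₀ K)
  | [] => 0
  | v :: l => act K Z (Ring.inverse (uel α (χ v))) (single (v :: l) (algebraMap (ZMod a) K (c v)))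

noncomputable def Dop (α : Fin m → K) (χ : Z → ((Fin m → ZMod a) →ₗ[ZMod a] ZMod a))
    (c : Z → ZMod a) : (List Z →₀ K) →ₗ[K] (List Z →₀ K) :=
  Finsupp.linearCombination K (DL α χ c)

lemma Dop_single (α : Fin m → K) (χ : Z → ((Fin m → ZMod a) →ₗ[ZMod a] ZMod a))
    (c : Z → ZMod a) (l : List Z) (r : K) : Dop α χ c (single l r) = r • DL α χ c l := by
  simp [Dop]

lemma act_mem (n : ℕ) (b : MonoidAlgebra K (Gam a m)) {v : List Z →₀ K} (hv : v ∈ Hom' K Z n) :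
    act K Z b v ∈ Hom' K Z n := by
  refine permRep_mem _ ?_ b hv
  intro g l hl
  exact (listAct_length g l).trans hl

lemma Dop_mem (α : Fin m → K) (χ : Z → ((Fin m → ZMod a) →ₗ[ZMod a] ZMod a))
    (c : Z → ZMod a) (n : ℕ) (v : List Z →₀ K) (hv : v ∈ Hom' K Z n) :
    Dop α χ c v ∈ Hom' K Z n := by
  refine lin_mem ?_ hv
  intro l hl
  rw [Dop_single, one_smul]
  cases l with
  | nil => exact Submodule.zero_mem _
  | cons v l => exact act_mem n _ (single_mem_supported hl _)

lemma act_xel (α : Fin m → K) (z : List Z →₀ K) : act K Z (xel a α) z =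
    ∑ i, α i • (permRep K (listAct (Gam a m) Z) (gen a i) z - z) := by
  rw [xel]
  simp only [act, map_sum, map_sub, Representation.asAlgebraHom_single, LinearMap.sum_apply,
    LinearMap.sub_apply, LinearMap.smul_apply, map_one, Module.End.one_apply, smul_sub]

lemma act_uel (α : Fin m → K) (χ : (Fin m → ZMod a) →ₗ[ZMod a] ZMod a) (z : List Z →₀ K) :
    act K Z (uel α χ) z =
    ∑ i, (α i * algebraMap (ZMod a) K (χ (Pi.single i 1))) •
      (permRep K (listAct (Gam a m) Z) (gen a i) z) := by
  rw [uel]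
  simp only [act, map_sum, Representation.asAlgebraHom_single, LinearMap.sum_apply,
    LinearMap.smul_apply]

lemma act_mul (b b' : MonoidAlgebra K (Gam a m)) (z : List Z →₀ K) :
    act K Z (b * b') z = act K Z b (act K Z b' z) := by
  simp [act]

lemma act_comm (b b' : MonoidAlgebra K (Gam a m)) (z : List Z →₀ K) :
    act K Z b (act K Z b' z) = act K Z b' (act K Z b z) := by
  rw [← act_mul, ← act_mul, mul_comm]

lemma act_perm (b : MonoidAlgebra K (Gam a m)) (g : Gam a m) (z : List Z →₀ K) :
    act K Z b (permRep K (listAct (Gam a m) Z) g z) =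
      permRep K (listAct (Gam a m) Z) g (act K Z b z) := by
  have := act_comm b (MonoidAlgebra.of K _ g) z
  simpa [act, Representation.asAlgebraHom_of] using this

lemma Dop_xel (α : Fin m → K) (hα : LinearIndependent (ZMod a) α)
    (χ : Z → ((Fin m → ZMod a) →ₗ[ZMod a] ZMod a)) (hχ : ∀ z, χ z ≠ 0)
    (hχg : ∀ (g : Gam a m) z, χ (g • z) = χ z)
    (c : Z → ZMod a) (hc : ∀ (g : Gam a m) z, c (g • z) = c z + χ z (Multiplicative.toAdd g))
    (n : ℕ) (v : List Z →₀ K) (hv : v ∈ Hom' K Z (n + 1)) :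
    Dop α χ c (act K Z (xel a α) v) = act K Z (xel a α) (Dop α χ c v) + v := by
  have key : ∀ l ∈ {l : List Z | l.length = n + 1},
      ((Dop α χ c).comp (act K Z (xel a α))) (single l 1) =
      ((act K Z (xel a α)).comp (Dop α χ c) + (LinearMap.id : (List Z →₀ K) →ₗ[K] (List Z →₀ K)) :
        (List Z →₀ K) →ₗ[K] (List Z →₀ K)) (single l 1) := by
    intro l hl
    cases l with
    | nil => simp at hl
    | cons v l =>
      have h1 : ∀ g : Gam a m, Dop α χ c (permRep K (listAct (Gam a m) Z) g (single (v :: l) 1)) =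
          permRep K (listAct (Gam a m) Z) g (Dop α χ c (single (v :: l) 1)) +
          act K Z (Ring.inverse (uel α (χ v)))
            (algebraMap (ZMod a) K (χ v (Multiplicative.toAdd g)) •
              permRep K (listAct (Gam a m) Z) g (single (v :: l) 1)) := by
        intro g
        rw [permRep_single, Dop_single, Dop_single, one_smul, one_smul, listAct_cons, DL, DL,
          ← act_perm, permRep_single, listAct_cons, hχg, hc, ← map_add]
        congr 1
        rw [Finsupp.smul_single, ← Finsupp.single_add, map_add, smul_eq_mul, mul_one]
      simp only [LinearMap.comp_apply, LinearMap.add_apply, LinearMap.id_apply]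
      rw [act_xel, act_xel, map_sum]
      have h2 : ∀ i, Dop α χ c (α i • (permRep K (listAct (Gam a m) Z) (gen a i) (single (v :: l) 1)
            - single (v :: l) 1)) =
          α i • (permRep K (listAct (Gam a m) Z) (gen a i) (Dop α χ c (single (v :: l) 1))
            - Dop α χ c (single (v :: l) 1)) +
          act K Z (Ring.inverse (uel α (χ v)))
            ((α i * algebraMap (ZMod a) K (χ v (Pi.single i 1))) •
              permRep K (listAct (Gam a m) Z) (gen a i) (single (v :: l) 1)) := by
        intro i
        rw [map_smul, map_sub, h1, mul_smul, map_smul (act K Z _) (α i), ← smul_add]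
        congr 1
        simp only [gen, toAdd_ofAdd]
        abel
      rw [Finset.sum_congr rfl (fun i _ => h2 i), Finset.sum_add_distrib, ← map_sum, ← act_uel,
        ← act_mul, Ring.inverse_mul_cancel _ (uel_unit α hα _ (hχ v))]
      simp [act]
  exact lin_eq_on key hv

/-- freeness of chains over a space without fixed points -/
def FreeD (Z : Type) {a m : ℕ} [MulAction (Gam a m) Z] : Prop :=
    ∃ (χ : Z → ((Fin m → ZMod a) →ₗ[ZMod a] ZMod a)) (c : Z → ZMod a), (∀ z, χ z ≠ 0) ∧
    (∀ (g : Gam a m) z, χ (g • z) = χ z) ∧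
    (∀ (g : Gam a m) z, c (g • z) = c z + χ z (Multiplicative.toAdd g))

lemma act_pow (b : MonoidAlgebra K (Gam a m)) (n : ℕ) :
    act K Z (b ^ n) = (act K Z b) ^ n := by
  simp [act]

lemma free_lists (hZ : FreeD (a := a) (m := m) Z) (α : Fin m → K) (hα : LinearIndependent (ZMod a) α)
    (n d p : ℕ) (hpd : p + d = a) (v : List Z →₀ K) (hv : v ∈ Hom' K Z (n + 1))
    (h : act K Z (xel a α ^ p) v = 0) : ∃ w ∈ Hom' K Z (n + 1), v = act K Z (xel a α ^ d) w := by
  obtain ⟨χ, c, h1, h2, h3⟩ := hZ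
  rw [act_pow] at h ⊢
  exact free_pow a (act K Z (xel a α)) (Dop α χ c) (Hom' K Z (n + 1)) (fun v hv => act_mem _ _ hv)
    (fun v hv => Dop_mem α χ c _ v hv) (fun v hv => Dop_xel α hα χ h1 h2 c h3 n v hv) d p hpd v hv h

lemma freeD_of_no_fixed (hZ : ∀ z : Z, ∃ g : Gam a m, g • z ≠ z) : FreeD (a := a) (m := m) Z := by
  classical
  let rep : Z → Z := fun z => (Quotient.out (Quotient.mk (MulAction.orbitRel (Gam a m) Z) z))
  have hrep : ∀ z, ∃ g : Gam a m, g • rep z = z := by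
    intro z
    have : (MulAction.orbitRel (Gam a m) Z) (rep z) z := Quotient.exact (Quotient.out_eq _)
    have h2 := (MulAction.orbitRel (Gam a m) Z).symm this
    exact (MulAction.orbitRel_apply.1 h2)
  have hrepg : ∀ (g : Gam a m) z, rep (g • z) = rep z := by
    intro g z
    have : Quotient.mk (MulAction.orbitRel (Gam a m) Z) (g • z) =
        Quotient.mk (MulAction.orbitRel (Gam a m) Z) z :=
      Quotient.sound (MulAction.orbitRel_apply.2 ⟨g, rfl⟩)
    simp only [rep, this]
  choose γ hγ using hrep
  have hχ : ∀ z : Z, ∃ χ : (Fin m → ZMod a) →ₗ[ZMod a] ZMod a, χ ≠ 0 ∧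
      ∀ g : Gam a m, g • z = z → χ (Multiplicative.toAdd g) = 0 := by
    intro z
    let S : AddSubgroup (Fin m → ZMod a) :=
      (Subgroup.toAddSubgroup' (MulAction.stabilizer (Gam a m) z))
    let W := AddSubgroup.toZModSubmodule a S
    have hW : W < ⊤ := by
      rw [lt_top_iff_ne_top]
      intro h
      obtain ⟨g, hg⟩ := hZ z
      have : Multiplicative.toAdd g ∈ W := by rw [h]; trivial
      exact hg this
    obtain ⟨f, hf, hf'⟩ := Submodule.exists_le_ker_of_lt_top W hW
    refine ⟨f, hf, fun g hg => ?_⟩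
    have : Multiplicative.toAdd g ∈ W := hg
    exact hf' this
  choose χ hχ0 hχ1 using hχ
  refine ⟨fun z => χ (rep z), fun z => χ (rep z) (Multiplicative.toAdd (γ z)), fun z => hχ0 _,
    fun g z => by simp only [hrepg], fun g z => ?_⟩
  simp only [hrepg]
  rw [← map_add, ← sub_eq_zero, ← map_sub]
  have : (Multiplicative.toAdd (γ (g • z)) - (Multiplicative.toAdd (γ z) + Multiplicative.toAdd g))
      = Multiplicative.toAdd ((γ z * g)⁻¹ * γ (g • z)) := by
    simp [sub_eq_neg_add]
  rw [this]
  apply hχ1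
  rw [mul_smul, inv_smul_eq_iff]
  have h1 := hγ (g • z)
  rw [hrepg] at h1
  rw [h1, mul_comm, mul_smul, hγ]

/-- descent -/
lemma descent (hZ : FreeD (a := a) (m := m) Z) (α : Fin m → K) (hα : LinearIndependent (ZMod a) α)
    (N : ℕ) (e : ℕ → (List Z →₀ K)) (he : ∀ j, e j ∈ Hom' K Z (j + 1))
    (hd : ∀ j < N, bd K Z (e (j + 1)) = act K Z (xel a α ^ ex a j) (e j))
    (h0 : bd K Z (e 0) = single [] 1) (hN : e N = 0) : False := by
  have bdact : ∀ (b : MonoidAlgebra K (Gam a m)) c, bd K Z (act K Z b c) = act K Z b (bd K Z c) := fun b c =>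
    intertwine _ _ (bd K Z) (fun g v => bd_equiv g v) b c
  have P : ∀ i ≤ N, ∃ f ∈ Hom' K Z (N - i + 1), ∃ f' ∈ Hom' K Z (N - i + 2),
      e (N - i) = bd K Z f' + act K Z (xel a α ^ ex a (N - i + 1)) f := by
    intro i
    induction i with
    | zero => intro _; exact ⟨0, Submodule.zero_mem _, 0, Submodule.zero_mem _, by simp [hN]⟩
    | succ i ih =>
      intro hi
      obtain ⟨f, hf, f', hf', h⟩ := ih (by omega)
      obtain ⟨j, hj⟩ : ∃ j, N - (i + 1) = j := ⟨_, rfl⟩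
      have hj' : N - i = j + 1 := by omega
      rw [hj'] at h hf
      rw [hj]
      have h1 : act K Z (xel a α ^ ex a j) (e j - bd K Z f) = 0 := by
        rw [map_sub, ← hd j (by omega), h, map_add, bd_bd, bdact, show j + 1 + 1 = j + 2 from rfl,
          ex_add_two, zero_add, sub_self]
      have hbf : bd K Z f ∈ Hom' K Z (j + 1) := by
        refine bd_mem ?_ hf
        intro l hl l' _ hl'
        have : l.length = j + 2 := hl
        change l'.length = j + 1
        omega
      obtain ⟨w, hw, hw'⟩ := free_lists hZ α hα j (ex a (j + 1)) (ex a j) (ex_add j) _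
        (Submodule.sub_mem _ (he j) hbf) h1
      exact ⟨w, hw, f, hf, by rw [← hw']; abel⟩
  obtain ⟨f, hf, f', hf', h⟩ := P N le_rfl
  rw [Nat.sub_self] at h
  have h2 := congrArg (bd K Z) h
  rw [h0, map_add, bd_bd, zero_add, bdact] at h2
  have h3 := DFunLike.congr_fun h2 ([] : List Z)
  obtain ⟨q, hq⟩ : ∃ q, ex a (0 + 1) = q + 1 := ⟨ex a (0 + 1) - 1, by have := ex_pos (a := a) (0 + 1); omega⟩
  rw [hq, pow_succ', act_mul] at h3
  rw [xel_nil] at h3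
  simp at h3
end DD
end OV

set_option linter.unusedSectionVars false
namespace OV
open Finsupp

section Metric
variable {K : Type} [Field K]
variable {X : Type} [PseudoMetricSpace X]
variable {Γ : Type} [Group Γ] [Finite Γ] [MulAction Γ X]

/-- invariant closeness -/
def near (Γ : Type) [Group Γ] [MulAction Γ X] (δ : ℝ) (x y : X) : Prop :=
  ∀ g : Γ, dist (g • x) (g • y) < δ

lemma near_symm {δ : ℝ} {x y : X} (h : near Γ δ x y) : near Γ δ y x := fun g => by
  rw [dist_comm]; exact h g

lemma near_trans {δ δ' : ℝ} {x y z : X} (h : near Γ δ x y) (h' : near Γ δ' y z) :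
    near Γ (δ + δ') x z := fun g =>
  (dist_triangle _ (g • y) _).trans_lt (add_lt_add (h g) (h' g))

lemma near_mono {δ δ' : ℝ} (hd : δ ≤ δ') {x y : X} (h : near Γ δ x y) : near Γ δ' x y :=
  fun g => (h g).trans_le hd

lemma near_smul {δ : ℝ} {x y : X} (h : near Γ δ x y) (γ : Γ) : near Γ δ (γ • x) (γ • y) :=
  fun g => by rw [← mul_smul, ← mul_smul]; exact h _

lemma near_dist {δ : ℝ} {x y : X} (h : near Γ δ x y) : dist x y < δ := by simpa using h 1

lemma near_self {δ : ℝ} (hδ : 0 < δ) (x : X) : near Γ δ x x := fun g => by simpa using hδ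

lemma near_of_dist [CompactSpace X] (hcont : ∀ g : Γ, Continuous (fun x : X => g • x)) {ε : ℝ}
    (hε : 0 < ε) : ∃ δ > 0, ∀ x y : X, dist x y < δ → near Γ ε x y := by
  have h1 : ∀ g : Γ, ∃ δ > 0, ∀ x y : X, dist x y < δ → dist (g • x) (g • y) < ε := by
    intro g
    have := CompactSpace.uniformContinuous_of_continuous (hcont g)
    obtain ⟨δ, hδ, h⟩ := Metric.uniformContinuous_iff.1 this ε hε
    exact ⟨δ, hδ, fun x y hxy => h hxy⟩
  choose d hd h using h1
  obtain ⟨δ, hδ, hδ'⟩ : ∃ δ > 0, ∀ g, δ ≤ d g := by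
    obtain ⟨g0, hg0⟩ := Finite.exists_min d
    exact ⟨d g0, hd g0, hg0⟩
  exact ⟨δ, hδ, fun x y hxy g => h g x y (hxy.trans_le (hδ' g))⟩

/-- small lists -/
def Small (Γ X : Type) [PseudoMetricSpace X] [Group Γ] [MulAction Γ X] (δ : ℝ) (n : ℕ) :
    Set (List X) :=
  {l | l.length = n ∧ ∀ x ∈ l, ∀ y ∈ l, near Γ δ x y}

lemma Small_mono {δ δ' : ℝ} (h : δ ≤ δ') (n : ℕ) : Small Γ X δ n ⊆ Small Γ X δ' n :=
  fun _ hl => ⟨hl.1, fun x hx y hy => near_mono h (hl.2 x hx y hy)⟩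

lemma fill [CompactSpace X] (hcont : ∀ g : Γ, Continuous (fun x : X => g • x)) (k : ℕ)
    (happ : ∀ ε > 0, ∃ π : X → X, (∀ q, dist (π q) q < ε) ∧ ∃ η > 0, ∀ x, ∃ S : Finset X,
      S.card ≤ k + 1 ∧ ∀ y, dist y x < η → π y ∈ S) {ε : ℝ} (hε : 0 < ε) :
    ∃ δ > 0, ∀ n ≥ k + 2, ∀ z ∈ Finsupp.supported K K (Small Γ X δ n), bd K X z = 0 →
      ∃ w ∈ Finsupp.supported K K (Small Γ X ε (n + 1)), bd K X w = z := by
  classical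
  obtain ⟨ε', hε', h1⟩ := near_of_dist (X := X) hcont hε
  obtain ⟨π, hπ, η, hη, hS⟩ := happ (ε' / 3) (by positivity)
  refine ⟨min (ε' / 3) η, lt_min (by positivity) hη, fun n hn z hz hbz => ?_⟩
  letI : LinearOrder X := IsWellOrder.linearOrder WellOrderingRel
  have hdist : ∀ l ∈ Small Γ X (min (ε' / 3) η) n, ∀ x ∈ l, ∀ y ∈ l, dist x y < min (ε' / 3) η :=
    fun l hl x hx y hy => near_dist (hl.2 x hx y hy)
  refine ⟨Hty K id π z, ?_, ?_⟩
  · refine lin_mem ?_ hz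
    intro l hl
    rw [Hty_single]
    refine Finsupp.supported_mono ?_ (hL_mem id π l)
    rintro s ⟨hs1, hs2⟩
    refine ⟨by rw [hs2, hl.1], ?_⟩
    have hclose : ∀ x ∈ s, ∃ x' ∈ l, dist x x' < ε' / 3 := by
      intro x hx
      rcases hs1 x hx with h | h
      · exact ⟨x, h, by rw [dist_self]; positivity⟩
      · obtain ⟨x', hx', rfl⟩ := List.mem_map.1 h
        exact ⟨x', hx', hπ x'⟩
    intro x hx y hy
    obtain ⟨x', hx', hxx⟩ := hclose x hx
    obtain ⟨y', hy', hyy⟩ := hclose y hy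
    apply h1
    have h2 := (hdist l hl x' hx' y' hy').trans_le (min_le_left _ _)
    have h3 := dist_triangle4 x x' y' y
    rw [dist_comm y y'] at hyy
    linarith
  · have key : ∀ l ∈ Small Γ X (min (ε' / 3) η) n,
        ((bd K X).comp (Hty K id π) + (Hty K id π).comp (bd K X)) (single l 1) =
        (LinearMap.id : (List X →₀ K) →ₗ[K] (List X →₀ K)) (single l 1) := by
      intro l hl
      have h2 := bd_hL (K := K) id π l (fun x _ y _ h => h)
      have h3 : SL K id π l = 0 := by
        have hne : l ≠ [] := by
          rintro rfl
          have := hl.1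
          simp at this
          omega
        obtain ⟨x, hx⟩ := List.exists_mem_of_ne_nil l hne
        obtain ⟨S, hS1, hS2⟩ := hS x
        refine SL_eq_zero id π l S (fun y hy => hS2 y ?_) (by have := hl.1; omega)
        exact (hdist l hl y hy x hx).trans_le (min_le_right _ _)
      rw [h3, sub_zero] at h2
      simpa using h2
    have := lin_eq_on key hz
    simpa [hbz] using this

end Metric

section Slice
variable {K : Type} [Field K]
variable {X : Type}
variable {Γ : Type} [Group Γ] [MulAction Γ X]

lemma insL_equiv {O : Type} [LinearOrder O] (ρ : X → O) (hρ : ∀ (g : Γ) x, ρ (g • x) = ρ x)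
    (g : Γ) (v : X) (l : List X) :
    insL K ρ (g • v) (listAct Γ X g l) = permRep K (listAct Γ X) g (insL K ρ v l) := by
  induction l with
  | nil => simp [listAct_nil, listAct_cons, insL]
  | cons w l ih =>
    rw [listAct_cons, insL, insL]
    simp only [hρ]
    split_ifs <;> simp [listAct_cons, cone_equiv, ih]

lemma ins_equiv {O : Type} [LinearOrder O] (ρ : X → O) (hρ : ∀ (g : Γ) x, ρ (g • x) = ρ x)
    (g : Γ) (v : X) (c : List X →₀ K) :
    ins K ρ (g • v) (permRep K (listAct Γ X) g c) = permRep K (listAct Γ X) g (ins K ρ v c) := by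
  have : (ins K ρ (g • v)).comp (permRep K (listAct Γ X) g) =
      (permRep K (listAct Γ X) g).comp (ins K ρ v) := by
    apply lin_ext; intro l
    simp [insL_equiv ρ hρ]
  exact LinearMap.congr_fun this c

lemma SortC_equiv {O : Type} [LinearOrder O] (ρ : X → O) (hρ : ∀ (g : Γ) x, ρ (g • x) = ρ x)
    (π : X → X) (hπ : ∀ (g : Γ) x, π (g • x) = g • π x) (g : Γ) (c : List X →₀ K) :
    SortC K ρ π (permRep K (listAct Γ X) g c) = permRep K (listAct Γ X) g (SortC K ρ π c) := by
  have : (SortC K ρ π).comp (permRep K (listAct Γ X) g) =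
      (permRep K (listAct Γ X) g).comp (SortC K ρ π) := by
    apply lin_ext; intro l
    simp only [LinearMap.comp_apply, permRep_single, SortC_single]
    induction l with
    | nil => simp [listAct_nil, SL]
    | cons w l ih => rw [listAct_cons, SL, SL, hπ, ih, ins_equiv ρ hρ]
  exact LinearMap.congr_fun this c

variable [Finite Γ] 

lemma slices [MetricSpace X] [CompactSpace X] (hcont : ∀ g : Γ, Continuous (fun x : X => g • x)) :
    ∃ (O : Type) (_ : LinearOrder O) (ρ : X → O) (π : X → X) (Q : Finset O) (δ : ℝ), 0 < δ ∧
      (∀ (g : Γ) x, ρ (g • x) = ρ x) ∧ (∀ (g : Γ) x, π (g • x) = g • π x) ∧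
      (∀ x, ρ (π x) ∈ Q) ∧
      (∀ x y, near Γ δ x y → ρ (π x) = ρ (π y) → π x = π y) := by
  classical
  let O := MulAction.orbitRel.Quotient Γ X
  letI : LinearOrder O := IsWellOrder.linearOrder WellOrderingRel
  let ρ : X → O := fun x => Quotient.mk (MulAction.orbitRel Γ X) x
  have hρ : ∀ (g : Γ) x, ρ (g • x) = ρ x := fun g x =>
    Quotient.sound (MulAction.orbitRel_apply.2 ⟨g, rfl⟩)
  have hρ' : ∀ x y, ρ x = ρ y → ∃ g : Γ, g • x = y := fun x y h => by
    have := Quotient.exact h.symm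
    exact (MulAction.orbitRel_apply.1 this)
  let rep : X → X := fun x => (ρ x).out
  have hrepρ : ∀ x, ρ (rep x) = ρ x := fun x => Quotient.out_eq _
  have hrepg : ∀ x y, ρ x = ρ y → rep x = rep y := fun x y h => by simp only [rep, h]
  -- radii
  have hr0 : ∀ x : X, ∃ r : ℝ, 0 < r ∧ ∀ g : Γ, near Γ (4 * r) x (g • x) → g • x = x := by
    intro x
    have : ∀ g : Γ, ∃ d : ℝ, 0 < d ∧ (dist x (g • x) < d → g • x = x) := by
      intro g
      by_cases h : g • x = x
      · exact ⟨1, one_pos, fun _ => h⟩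
      · exact ⟨dist x (g • x), dist_pos.2 (Ne.symm h), fun h' => absurd h' (lt_irrefl _)⟩
    choose d hd h using this
    obtain ⟨g0, hg0⟩ := Finite.exists_min d
    refine ⟨d g0 / 4, by have := hd g0; positivity, fun g hg => h g ?_⟩
    have := near_dist hg
    have := hg0 g
    linarith
  choose r0 hr0 hr1 using hr0
  let r : X → ℝ := fun x => r0 (rep x)
  have hrpos : ∀ x, 0 < r x := fun x => hr0 _
  have hrinv : ∀ x y, ρ x = ρ y → r x = r y := fun x y h => by simp only [r, hrepg x y h]
  have hrfix : ∀ x, ∀ g : Γ, near Γ (4 * r x) x (g • x) → g • x = x := by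
    intro x g h
    obtain ⟨γ, hγ⟩ := hρ' (rep x) x (hrepρ x)
    have h1 := near_smul h γ⁻¹
    have h2 : γ⁻¹ • x = rep x := by rw [inv_smul_eq_iff, hγ]
    have h3 : γ⁻¹ • g • x = (γ⁻¹ * g * γ) • rep x := by rw [mul_smul, mul_smul, hγ]
    rw [h2, h3] at h1
    have h4 := hr1 _ _ h1
    rw [← h3, inv_smul_eq_iff, hγ] at h4
    exact h4
  -- cover
  have hcov : ∃ C : Finset X, ∀ y, ∃ c ∈ C, near Γ (r c) y c := by
    have : ∀ x : X, ∃ δ > 0, ∀ y, dist y x < δ → near Γ (r x) y x := by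
      intro x
      obtain ⟨δ, hδ, h⟩ := near_of_dist (X := X) hcont (hrpos x)
      exact ⟨δ, hδ, fun y hy => h y x hy⟩
    choose d hd h using this
    obtain ⟨C, -, hC⟩ := isCompact_univ.elim_nhds_subcover (fun x : X => Metric.ball x (d x))
      (fun x _ => Metric.ball_mem_nhds x (hd x))
    refine ⟨C, fun y => ?_⟩
    have := hC (Set.mem_univ y)
    simp only [Set.mem_iUnion] at this
    obtain ⟨c, hc, hy⟩ := this
    exact ⟨c, hc, h c y hy⟩
  obtain ⟨C, hC⟩ := hcov
  choose ce hce hce' using hC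
  have hγ : ∀ x : X, ∃ γ : Γ, γ • rep x = x := fun x => hρ' _ _ (hrepρ x)
  choose γ hγ using hγ
  let π : X → X := fun x => γ x • ce (rep x)
  have hπρ : ∀ x, ρ (π x) = ρ (ce (rep x)) := fun x => hρ _ _
  have hπnear : ∀ x, near Γ (r (π x)) x (π x) := by
    intro x
    have := near_smul (hce' (rep x)) (γ x)
    rw [hγ, hrinv _ _ (hπρ x).symm] at this
    exact this
  have hπg : ∀ (g : Γ) x, π (g • x) = g • π x := by
    intro g x
    have e : rep (g • x) = rep x := hrepg _ _ (hρ g x)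
    set c := ce (rep x) with hc
    have h1 : ((γ (g • x))⁻¹ * g * γ x) • rep x = rep x := by
      rw [mul_smul, mul_smul, hγ, inv_smul_eq_iff]
      have := hγ (g • x)
      rw [e] at this
      exact this.symm
    have h2 := hce' (rep x)
    have h3 := near_smul h2 ((γ (g • x))⁻¹ * g * γ x)
    rw [h1] at h3
    have h4 := hrfix c _ (near_mono (by have := hrpos c; linarith) (near_trans (near_symm h2) h3))
    rw [mul_smul, mul_smul, inv_smul_eq_iff] at h4
    change γ (g • x) • ce (rep (g • x)) = g • γ x • c
    rw [e, h4]
  obtain ⟨δ, hδ, hδ'⟩ : ∃ δ > 0, ∀ c ∈ C, δ ≤ r c := by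
    by_cases hne : C.Nonempty
    · obtain ⟨c, hc, h⟩ := C.exists_min_image r hne
      exact ⟨r c, hrpos c, h⟩
    · refine ⟨1, one_pos, fun c hc => absurd ⟨c, hc⟩ hne⟩
  refine ⟨O, inferInstance, ρ, π, C.image ρ, δ, hδ, hρ, hπg, ?_, ?_⟩
  · intro x
    rw [hπρ]
    exact Finset.mem_image_of_mem _ (hce _)
  · intro x y hxy h
    obtain ⟨g, hg⟩ := hρ' _ _ h
    have h1 := hπnear x
    have h2 := hπnear y
    rw [hrinv _ _ h.symm] at h2
    have h3 : δ ≤ r (π x) := by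
      rw [hrinv _ _ (hπρ x)]
      exact hδ' _ (hce _)
    have h4 := near_trans (near_trans (near_symm h1) hxy) h2
    rw [← hg] at h4
    rw [← hg]
    exact (hrfix _ g (near_mono (by linarith [hrpos (π x)]) h4)).symm

end Slice
end OV

set_option linter.unusedSectionVars false
namespace OV
open Finsupp

section Core
variable {K : Type} [Field K]
variable {a m : ℕ} [Fact a.Prime] [CharP K a] [Algebra (ZMod a) K]
variable {X : Type} [MetricSpace X] [CompactSpace X] [MulAction (Gam a m) X]

lemma bd_act (b : MonoidAlgebra K (Gam a m)) (c : List X →₀ K) :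
    bd K X (act K X b c) = act K X b (bd K X c) :=
  intertwine _ _ (bd K X) (fun g v => bd_equiv g v) b c

lemma Small_act {δ : ℝ} {n : ℕ} (b : MonoidAlgebra K (Gam a m)) {v : List X →₀ K}
    (hv : v ∈ Finsupp.supported K K (Small (Gam a m) X δ n)) :
    act K X b v ∈ Finsupp.supported K K (Small (Gam a m) X δ n) := by
  refine permRep_mem _ ?_ b hv
  intro g l hl
  refine ⟨(listAct_length g l).trans hl.1, ?_⟩
  intro x hx y hy
  obtain ⟨x', hx', rfl⟩ := List.mem_map.1 hx
  obtain ⟨y', hy', rfl⟩ := List.mem_map.1 hy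
  exact near_smul (hl.2 x' hx' y' hy') g

/-- a partial resolution by small chains -/
def Res (K : Type) [Field K] (X : Type) [MetricSpace X] [MulAction (Gam a m) X]
    (α : Fin m → K) (M : ℕ) (δ : ℝ) (e : ℕ → (List X →₀ K)) : Prop :=
  (∀ j ≤ M, e j ∈ Finsupp.supported K K (Small (Gam a m) X δ (j + 1))) ∧
  (∀ j < M, bd K X (e (j + 1)) = act K X (xel a α ^ ex a j) (e j)) ∧
  bd K X (e 0) = single [] 1

lemma extend (hcont : ∀ g : Gam a m, Continuous (fun x : X => g • x)) (k : ℕ)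
    (happ : ∀ ε > 0, ∃ π : X → X, (∀ q, dist (π q) q < ε) ∧ ∃ η > 0, ∀ x, ∃ S : Finset X,
      S.card ≤ k + 1 ∧ ∀ y, dist y x < η → π y ∈ S) (α : Fin m → K)
    (h0 : ∀ δ > 0, ∃ e, Res (a := a) K X α (k + 1) δ e) (i : ℕ) :
    ∀ δ > 0, ∃ e, Res (a := a) K X α (k + 1 + i) δ e := by
  have : NeZero a := ⟨(Fact.out : a.Prime).ne_zero⟩
  have : Finite (Gam a m) := inferInstanceAs (Finite (Fin m → ZMod a))
  induction i with
  | zero => exact h0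
  | succ i ih =>
    intro ε hε
    obtain ⟨δ, hδ, hfill⟩ := fill (K := K) (X := X) hcont k happ hε
    obtain ⟨e, he1, he2, he3⟩ := ih (min δ ε) (lt_min hδ hε)
    obtain ⟨M, hM⟩ : ∃ M, k + 1 + i = M + 1 := ⟨k + i, by omega⟩
    rw [hM] at he1 he2
    rw [← add_assoc, hM]
    have hz1 := Finsupp.supported_mono (M := K) (R := K) (Small_mono (Γ := Gam a m) (X := X)
      (min_le_left δ ε) (M + 1 + 1)) (Small_act (xel a α ^ ex a (M + 1)) (he1 (M + 1) le_rfl))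
    have hz2 : bd K X (act K X (xel a α ^ ex a (M + 1)) (e (M + 1))) = 0 := by
      rw [bd_act, he2 M (by omega), ← act_mul, ← pow_add, add_comm, ex_add, xel_pow]
      simp [act]
    obtain ⟨w, hw, hw'⟩ := hfill (M + 1 + 1) (by omega) _ hz1 hz2
    refine ⟨fun j => if j ≤ M + 1 then e j else w, ?_, ?_, ?_⟩
    · intro j hj
      by_cases h : j ≤ M + 1
      · simp only [h, if_true]
        exact Finsupp.supported_mono (Small_mono (min_le_right δ ε) _) (he1 j h)
      · have : j = M + 1 + 1 := by omega
        subst this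
        simp only [h, if_false]
        exact hw
    · intro j hj
      by_cases h : j ≤ M
      · simp only [show j + 1 ≤ M + 1 by omega, show j ≤ M + 1 by omega, if_true]
        exact he2 j (by omega)
      · have : j = M + 1 := by omega
        subst this
        simpa using hw'
    · simpa using he3

theorem core (hcont : ∀ g : Gam a m, Continuous (fun x : X => g • x)) (k : ℕ)
    (happ : ∀ ε > 0, ∃ π : X → X, (∀ q, dist (π q) q < ε) ∧ ∃ η > 0, ∀ x, ∃ S : Finset X,
      S.card ≤ k + 1 ∧ ∀ y, dist y x < η → π y ∈ S) (α : Fin m → K)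
    (hα : LinearIndependent (ZMod a) α)
    (hfree : ∀ x : X, ∃ g : Gam a m, g • x ≠ x)
    (h0 : ∀ δ > 0, ∃ e, Res (a := a) K X α (k + 1) δ e) : False := by
  have : NeZero a := ⟨(Fact.out : a.Prime).ne_zero⟩
  have : Finite (Gam a m) := inferInstanceAs (Finite (Fin m → ZMod a))
  obtain ⟨O, _, ρ, π, Q, δ, hδ, hρ, hπ, hQ, hgood⟩ := slices (X := X) hcont
  obtain ⟨e, he1, he2, he3⟩ := extend hcont k happ α h0 Q.card δ hδ
  set M := k + 1 + Q.card with hM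
  have hmem : ∀ j ≤ M, SortC K ρ π (e j) ∈ Hom' K X (j + 1) := by
    intro j hj
    refine lin_mem ?_ (he1 j hj)
    intro l hl
    rw [SortC_single]
    refine Finsupp.supported_mono ?_ (SL_mem ρ π l)
    rintro s ⟨-, -, h⟩
    change s.length = j + 1
    rw [h, hl.1]
  have hbd : ∀ j ≤ M, bd K X (SortC K ρ π (e j)) = SortC K ρ π (bd K X (e j)) := by
    intro j hj
    have key : ∀ l ∈ Small (Gam a m) X δ (j + 1), ((bd K X).comp (SortC K ρ π)) (single l 1) =
        ((SortC K ρ π).comp (bd K X)) (single l 1) := by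
      intro l hl
      simp only [LinearMap.comp_apply, SortC_single, bd_single]
      exact bd_SL ρ π l fun x hx y hy h => hgood x y (hl.2 x hx y hy) h
    exact lin_eq_on key (he1 j hj)
  refine descent (Z := X) (freeD_of_no_fixed hfree) α hα Q.card
    (fun j => if j ≤ M then SortC K ρ π (e j) else 0) ?_ ?_ ?_ ?_
  · intro j
    by_cases h : j ≤ M
    · simpa only [h, if_true] using hmem j h
    · simp only [h, if_false]; exact Submodule.zero_mem _
  · intro j hj
    simp only [show j + 1 ≤ M by omega, show j ≤ M by omega, if_true]
    rw [hbd _ (by omega), he2 j (by omega)]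
    exact intertwine _ _ (SortC K ρ π) (fun g v => SortC_equiv ρ hρ π hπ g v) _ _
  · simp only [Nat.zero_le, if_true]
    rw [hbd 0 (Nat.zero_le _), he3, SortC_single, SL]
  · simp only [show Q.card ≤ M by omega, if_true]
    have key : ∀ l ∈ Small (Gam a m) X δ (Q.card + 1), (SortC K ρ π) (single l 1) =
        (0 : (List X →₀ K) →ₗ[K] (List X →₀ K)) (single l 1) := by
      intro l hl
      rw [SortC_single]
      exact SL_eq_zero ρ π l Q (fun x _ => hQ _) (by have := hl.1; omega)
    exact lin_eq_on key (he1 _ (by omega))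
end Core
end OV

set_option linter.unusedSectionVars false
namespace OV
open Finsupp

section Push
variable {K : Type} [Field K] {X Z W : Type}

variable (K) in
/-- push-forward of chains of lists -/
noncomputable def psh (f : X → Z) : (List X →₀ K) →ₗ[K] (List Z →₀ K) :=
  Finsupp.lmapDomain K K (List.map f)

@[simp] lemma psh_single (f : X → Z) (l : List X) (r : K) :
    psh K f (single l r) = single (l.map f) r := Finsupp.mapDomain_single

lemma psh_cone (f : X → Z) (v : X) (c : List X →₀ K) :
    psh K f (cone K v c) = cone K (f v) (psh K f c) := by
  have : (psh K f).comp (cone K v) = (cone K (f v)).comp (psh K f) := by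
    apply lin_ext; intro l; simp
  exact LinearMap.congr_fun this c

lemma bdL_map (f : X → Z) (l : List X) : bdL K (l.map f) = psh K f (bdL K l) := by
  induction l with
  | nil => simp [bdL]
  | cons v l ih => simp [bdL, ih, psh_cone]

lemma bd_psh (f : X → Z) (c : List X →₀ K) : bd K Z (psh K f c) = psh K f (bd K X c) := by
  have : (bd K Z).comp (psh K f) = (psh K f).comp (bd K X) := by
    apply lin_ext; intro l; simp [bdL_map]
  exact LinearMap.congr_fun this c

lemma psh_psh (f : X → Z) (g : Z → W) (c : List X →₀ K) :
    psh K g (psh K f c) = psh K (g ∘ f) c := by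
  have : (psh K g).comp (psh K f) = psh K (g ∘ f) := by
    apply lin_ext; intro l; simp
  exact LinearMap.congr_fun this c

lemma psh_congr (f f' : X → Z) (s : Set X) (h : ∀ x ∈ s, f x = f' x) (c : List X →₀ K)
    (hc : c ∈ Finsupp.supported K K {l : List X | ∀ x ∈ l, x ∈ s}) : psh K f c = psh K f' c := by
  refine lin_eq_on ?_ hc
  intro l hl
  rw [psh_single, psh_single]
  congr 1
  exact List.map_congr_left fun x hx => h x (hl x hx)

lemma bdL_ofFn (n : ℕ) (t : Fin (n + 1) → X) :
    bdL K (List.ofFn t) = ∑ i, single (List.ofFn (t ∘ Fin.succAbove i)) ((-1 : K) ^ (i : ℕ)) := by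
  induction n with
  | zero => simp [bdL]
  | succ n ih =>
    rw [List.ofFn_succ, bdL, ih, Fin.sum_univ_succ (n := n + 1)]
    rw [sub_eq_add_neg]
    congr 1
    · simp [Function.comp_def]
    · rw [map_sum, ← Finset.sum_neg_distrib]
      refine Finset.sum_congr rfl fun i _ => ?_
      have e : List.ofFn (t ∘ i.succ.succAbove) =
          t 0 :: List.ofFn ((fun i => t i.succ) ∘ i.succAbove) := by
        rw [List.ofFn_succ]
        simp [Function.comp_def]
      rw [e, Fin.val_succ, pow_succ, mul_neg_one, Finsupp.single_neg]
      congr 1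
      rw [← mul_one ((-1 : K) ^ (i : ℕ)), ← smul_eq_mul, ← Finsupp.smul_single, map_smul,
        cone_single, Finsupp.smul_single]
end Push

section Subdiv
variable {K : Type} [Field K] {E E' : Type}
  [NormedAddCommGroup E] [NormedSpace ℝ E] [NormedAddCommGroup E'] [NormedSpace ℝ E']

/-- barycenter -/
noncomputable def bary (l : List E) : E := (l.length : ℝ)⁻¹ • l.sum

variable (K) in
noncomputable def sdn : ℕ → List E → (List E →₀ K)
  | 0, _ => single [] 1
  | n + 1, l => cone K (bary l) (Finsupp.linearCombination K (sdn n) (bdL K l))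

variable (K E) in
/-- barycentric subdivision -/
noncomputable def SD : (List E →₀ K) →ₗ[K] (List E →₀ K) :=
  Finsupp.linearCombination K (fun l => sdn K l.length l)

lemma SD_nil : SD K E (single [] 1) = single [] 1 := by simp [SD, sdn]

lemma SD_cons (l : List E) (hl : l ≠ []) :
    SD K E (single l 1) = cone K (bary l) (SD K E (bdL K l)) := by
  obtain ⟨n, hn⟩ : ∃ n, l.length = n + 1 :=
    ⟨l.length - 1, by have := List.length_pos_iff.2 hl; omega⟩
  rw [SD, Finsupp.linearCombination_single, one_smul, hn, sdn]
  congr 1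
  refine lin_eq_on ?_ (bdL_mem l)
  rintro s ⟨-, hs⟩
  rw [Finsupp.linearCombination_single, Finsupp.linearCombination_single,
    show s.length = n by omega]

lemma bd_SD_aux (n : ℕ) : ∀ l : List E, l.length = n →
    bd K E (SD K E (single l 1)) = SD K E (bdL K l) := by
  induction n with
  | zero =>
    intro l hl
    rw [List.length_eq_zero_iff] at hl
    subst hl
    rw [SD_nil, bd_single, bdL, map_zero]
  | succ n ih =>
    intro l hl
    have hne : l ≠ [] := by rintro rfl; simp at hl
    rw [SD_cons l hne, bd_cone]
    have : bd K E (SD K E (bdL K l)) = SD K E (bd K E (bdL K l)) := by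
      have key : ∀ s ∈ {l' : List E | l'.Sublist l ∧ l'.length + 1 = l.length},
          ((bd K E).comp (SD K E)) (single s 1) = ((SD K E).comp (bd K E)) (single s 1) := by
        rintro s ⟨-, hs⟩
        simp only [LinearMap.comp_apply, bd_single]
        exact ih s (by omega)
      exact lin_eq_on key (bdL_mem l)
    rw [this, bd_bdL]
    simp

lemma bd_SD (c : List E →₀ K) : bd K E (SD K E c) = SD K E (bd K E c) := by
  have : (bd K E).comp (SD K E) = (SD K E).comp (bd K E) := by
    apply lin_ext; intro l
    simp only [LinearMap.comp_apply, bd_single]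
    exact bd_SD_aux _ l rfl
  exact LinearMap.congr_fun this c

lemma bary_map (φ : E →ₗ[ℝ] E') (l : List E) : bary (l.map φ) = φ (bary l) := by
  simp [bary, map_list_sum]

lemma SD_psh_aux (φ : E →ₗ[ℝ] E') (n : ℕ) : ∀ l : List E, l.length = n →
    SD K E' (single (l.map φ) 1) = psh K φ (SD K E (single l 1)) := by
  induction n with
  | zero =>
    intro l hl
    rw [List.length_eq_zero_iff] at hl
    subst hl
    simp [SD_nil]
  | succ n ih =>
    intro l hl
    have hne : l ≠ [] := by rintro rfl; simp at hl
    rw [SD_cons l hne, SD_cons _ (by simpa using hne), psh_cone, bary_map, bdL_map]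
    congr 1
    have key : ∀ s ∈ {l' : List E | l'.Sublist l ∧ l'.length + 1 = l.length},
        ((SD K E').comp (psh K φ)) (single s 1) = ((psh K φ).comp (SD K E)) (single s 1) := by
      rintro s ⟨-, hs⟩
      simp only [LinearMap.comp_apply, psh_single]
      exact ih s (by omega)
    exact lin_eq_on key (bdL_mem l)

lemma SD_psh (φ : E →ₗ[ℝ] E') (c : List E →₀ K) :
    SD K E' (psh K φ c) = psh K φ (SD K E c) := by
  have : (SD K E').comp (psh K φ) = (psh K φ).comp (SD K E) := by
    apply lin_ext; intro l
    simp only [LinearMap.comp_apply, psh_single]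
    exact SD_psh_aux φ _ l rfl
  exact LinearMap.congr_fun this c

lemma bary_mem (l : List E) (hl : l ≠ []) (s : Set E) (hs : Convex ℝ s) (h : ∀ x ∈ l, x ∈ s) :
    bary l ∈ s := by
  have hpos : 0 < l.length := List.length_pos_iff.2 hl
  have e : bary l = ∑ i : Fin l.length, (l.length : ℝ)⁻¹ • l.get i := by
    rw [← Finset.smul_sum, bary]
    congr 1
    simp [Fin.sum_univ_getElem]
  rw [e]
  refine hs.sum_mem (fun _ _ => by positivity) ?_ (fun i _ => h _ (List.get_mem _ _))
  simp only [Finset.sum_const, Finset.card_univ, Fintype.card_fin, nsmul_eq_mul]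
  field_simp

lemma norm_list_sum_le (l : List E) (d : ℝ) (h : ∀ x ∈ l, ‖x‖ ≤ d) : ‖l.sum‖ ≤ l.length * d := by
  induction l with
  | nil => simp
  | cons v l ih =>
    have h1 := ih fun x hx => h x (by simp [hx])
    have h2 := h v (by simp)
    rw [List.sum_cons, List.length_cons]
    push_cast
    have := norm_add_le v l.sum
    linarith

lemma sum_map_sub (l : List E) (v : E) : (l.map (fun x => x - v)).sum = l.sum - (l.length : ℝ) • v := by
  induction l with
  | nil => simp
  | cons w l ih =>
    rw [List.map_cons, List.sum_cons, List.sum_cons, ih, List.length_cons]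
    push_cast
    rw [add_smul, one_smul]
    abel

lemma bary_dist (l : List E) (v : E) (hv : v ∈ l) (d : ℝ)
    (h : ∀ x ∈ l, ∀ y ∈ l, dist x y ≤ d) : dist (bary l) v ≤ (1 - 1 / (l.length : ℝ)) * d := by
  obtain ⟨l1, l2, rfl⟩ := List.append_of_mem hv
  set l := l1 ++ v :: l2 with hl
  have hlen : l.length = (l1 ++ l2).length + 1 := by simp [hl]; omega
  have hpos : (0 : ℝ) < l.length := by rw [hlen]; positivity
  have e : bary l - v = (l.length : ℝ)⁻¹ • ((l1 ++ l2).map (fun x => x - v)).sum := by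
    have h1 : ((l1 ++ l2).map (fun x => x - v)).sum = (l.map (fun x => x - v)).sum := by
      simp [hl]
    rw [h1, sum_map_sub, smul_sub, smul_smul, inv_mul_cancel₀ hpos.ne', one_smul, bary]
  rw [dist_eq_norm, e, norm_smul, norm_inv, Real.norm_natCast]
  have h2 := norm_list_sum_le ((l1 ++ l2).map (fun x => x - v)) d (by
    intro x hx
    obtain ⟨y, hy, rfl⟩ := List.mem_map.1 hx
    rw [← dist_eq_norm]
    refine h y ?_ v hv
    rw [hl]
    rcases List.mem_append.1 hy with h | h <;> simp [h])
  rw [List.length_map] at h2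
  have h3 : (((l1 ++ l2).length : ℕ) : ℝ) = l.length - 1 := by rw [hlen]; push_cast; ring
  rw [h3] at h2
  calc (l.length : ℝ)⁻¹ * _ ≤ (l.length : ℝ)⁻¹ * ((l.length - 1) * d) := by gcongr
    _ = _ := by field_simp

lemma SD_mem (L : ℕ) (n : ℕ) : ∀ l : List E, l.length = n → n ≤ L → ∀ (s : Set E), Convex ℝ s →
    (∀ x ∈ l, x ∈ s) → ∀ d : ℝ, (∀ x ∈ l, ∀ y ∈ l, dist x y ≤ d) →
    SD K E (single l 1) ∈ Finsupp.supported K K {t | t.length = n ∧ (∀ x ∈ t, x ∈ s) ∧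
      ∀ x ∈ t, ∀ y ∈ t, dist x y ≤ (1 - 1 / (L : ℝ)) * d} := by
  induction n with
  | zero =>
    intro l hl _ s _ _ d _
    rw [List.length_eq_zero_iff] at hl
    subst hl
    rw [SD_nil]
    exact single_mem_supported (by simp) _
  | succ n ih =>
    intro l hl hL s hs hls d hd
    have hne : l ≠ [] := by rintro rfl; simp at hl
    obtain ⟨v0, hv0⟩ := List.exists_mem_of_ne_nil l hne
    have hd0 : 0 ≤ d := by simpa using hd v0 hv0 v0 hv0
    have hLn : (1 - 1 / (l.length : ℝ)) * d ≤ (1 - 1 / (L : ℝ)) * d := by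
      have : (0 : ℝ) < l.length := by rw [hl]; positivity
      have : (l.length : ℝ) ≤ L := by rw [hl]; exact_mod_cast hL
      gcongr
    have hL1 : (0 : ℝ) ≤ (1 - 1 / (L : ℝ)) * d := by
      refine mul_nonneg ?_ hd0
      have : (1 : ℝ) ≤ L := by exact_mod_cast (by omega : 1 ≤ L)
      rw [sub_nonneg, div_le_one (by linarith)]
      exact this
    rw [SD_cons l hne]
    have hs' : Convex ℝ (s ∩ Metric.closedBall (bary l) ((1 - 1 / (L : ℝ)) * d)) :=
      hs.inter (convex_closedBall _ _)
    have hls' : ∀ x ∈ l, x ∈ s ∩ Metric.closedBall (bary l) ((1 - 1 / (L : ℝ)) * d) := by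
      intro x hx
      refine ⟨hls x hx, ?_⟩
      rw [Metric.mem_closedBall, dist_comm]
      exact (bary_dist l x hx d hd).trans hLn
    have h1 : SD K E (bdL K l) ∈ Finsupp.supported K K {t | t.length = n ∧
        (∀ x ∈ t, x ∈ s ∩ Metric.closedBall (bary l) ((1 - 1 / (L : ℝ)) * d)) ∧
        ∀ x ∈ t, ∀ y ∈ t, dist x y ≤ (1 - 1 / (L : ℝ)) * d} := by
      refine lin_mem ?_ (bdL_mem l)
      rintro l' ⟨hl1, hl2⟩
      exact ih l' (by omega) (by omega) _ hs' (fun x hx => hls' x (hl1.subset hx)) d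
        (fun x hx y hy => hd x (hl1.subset hx) y (hl1.subset hy))
    refine cone_mem ?_ h1
    rintro t ⟨ht1, ht2, ht3⟩
    have hb : bary l ∈ s := bary_mem l hne s hs hls
    refine ⟨by simp [ht1], ?_, ?_⟩
    · intro x hx
      rcases List.mem_cons.1 hx with rfl | hx
      · exact hb
      · exact (ht2 x hx).1
    · intro x hx y hy
      rcases List.mem_cons.1 hx with rfl | hx <;> rcases List.mem_cons.1 hy with rfl | hy
      · simpa using hL1
      · have := (ht2 y hy).2
        rwa [Metric.mem_closedBall, dist_comm] at this
      · have := (ht2 x hx).2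
        rwa [Metric.mem_closedBall] at this
      · exact ht3 x hx y hy

variable (K E) in
/-- iterated subdivision -/
noncomputable def SDN (N : ℕ) : (List E →₀ K) →ₗ[K] (List E →₀ K) := (SD K E) ^ N

lemma SDN_succ (N : ℕ) (c : List E →₀ K) : SDN K E (N + 1) c = SD K E (SDN K E N c) := by
  rw [SDN, pow_succ']; rfl

lemma bd_SDN (N : ℕ) (c : List E →₀ K) : bd K E (SDN K E N c) = SDN K E N (bd K E c) := by
  induction N with
  | zero => rfl
  | succ N ih => rw [SDN_succ, SDN_succ, bd_SD, ih]

lemma SDN_psh (N : ℕ) (φ : E →ₗ[ℝ] E') (c : List E →₀ K) :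
    SDN K E' N (psh K φ c) = psh K φ (SDN K E N c) := by
  induction N with
  | zero => rfl
  | succ N ih => rw [SDN_succ, SDN_succ, ← SD_psh, ih]

lemma SDN_nil (N : ℕ) : SDN K E N (single [] 1) = single [] 1 := by
  induction N with
  | zero => rfl
  | succ N ih => rw [SDN_succ, ih, SD_nil]

lemma SDN_mem (N L : ℕ) (l : List E) (hl : l.length ≤ L) (s : Set E) (hs : Convex ℝ s)
    (hls : ∀ x ∈ l, x ∈ s) (d : ℝ) (hd : ∀ x ∈ l, ∀ y ∈ l, dist x y ≤ d) :
    SDN K E N (single l 1) ∈ Finsupp.supported K K {t | t.length = l.length ∧ (∀ x ∈ t, x ∈ s) ∧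
      ∀ x ∈ t, ∀ y ∈ t, dist x y ≤ (1 - 1 / (L : ℝ)) ^ N * d} := by
  induction N with
  | zero =>
    refine single_mem_supported ?_ _
    exact ⟨rfl, hls, by simpa using hd⟩
  | succ N ih =>
    rw [SDN_succ]
    refine lin_mem ?_ ih
    rintro t ⟨h1, h2, h3⟩
    have := SD_mem (K := K) L l.length t h1 hl s hs h2 _ h3
    rwa [← mul_assoc, ← pow_succ'] at this

end Subdiv
end OV

set_option linter.unusedSectionVars false
namespace OV
open Finsupp

section Sing
variable {K : Type} [Field K] {X Y : Type} [TopologicalSpace Y]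

/-- singular simplices -/
abbrev Sg (Y : Type) [TopologicalSpace Y] (n : ℕ) : Type := C(stdSimplex ℝ (Fin (n + 1)), Y)

/-- faces -/
noncomputable def face {n : ℕ} (i : Fin (n + 2)) (σ : Sg Y (n + 1)) : Sg Y n :=
  σ.comp ⟨stdSimplex.map i.succAbove, stdSimplex.continuous_map _⟩

variable (K Y) in
noncomputable def dS (n : ℕ) : (Sg Y (n + 1) →₀ K) →ₗ[K] (Sg Y n →₀ K) :=
  Finsupp.linearCombination K
    (fun σ => ∑ i : Fin (n + 2), single (face i σ) ((-1 : K) ^ (i : ℕ)))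

@[simp] lemma dS_single (n : ℕ) (σ : Sg Y (n + 1)) : dS K Y n (single σ 1) =
    ∑ i : Fin (n + 2), single (face i σ) ((-1 : K) ^ (i : ℕ)) := by simp [dS]

variable (K Y) in
noncomputable def aug : (Sg Y 0 →₀ K) →ₗ[K] K := Finsupp.linearCombination K (fun _ => 1)

@[simp] lemma aug_single (σ : Sg Y 0) : aug K Y (single σ 1) = 1 := by simp [aug]

/-- vertices of the standard simplex -/
def vts (n : ℕ) : List (Fin (n + 1) → ℝ) := List.ofFn (fun i => Pi.single i 1)

open Classical in
/-- extension of a map from the simplex -/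
noncomputable def extd {n : ℕ} (f : stdSimplex ℝ (Fin (n + 1)) → X) (p : Fin (n + 1) → ℝ) : X :=
  if h : p ∈ stdSimplex ℝ (Fin (n + 1)) then f ⟨p, h⟩ else f (stdSimplex.vertex 0)

lemma extd_of_mem {n : ℕ} (f : stdSimplex ℝ (Fin (n + 1)) → X) (p : Fin (n + 1) → ℝ)
    (h : p ∈ stdSimplex ℝ (Fin (n + 1))) : extd f p = f ⟨p, h⟩ := by
  rw [extd, dif_pos h]

variable (K) in
/-- subdivide and push forward -/
noncomputable def PhiL (F : Y → X) (N n : ℕ) (σ : Sg Y n) : List X →₀ K :=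
  psh K (extd (F ∘ σ)) (SDN K (Fin (n + 1) → ℝ) N (single (vts n) 1))

variable (K) in
noncomputable def Phi (F : Y → X) (N n : ℕ) : (Sg Y n →₀ K) →ₗ[K] (List X →₀ K) :=
  Finsupp.linearCombination K (PhiL K F N n)

@[simp] lemma Phi_single (F : Y → X) (N n : ℕ) (σ : Sg Y n) :
    Phi K F N n (single σ 1) = PhiL K F N n σ := by simp [Phi]

lemma vts_mem (n : ℕ) : ∀ x ∈ vts n, x ∈ stdSimplex ℝ (Fin (n + 1)) := by
  intro x hx
  obtain ⟨i, rfl⟩ := (List.mem_ofFn' _ _).1 hx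
  exact single_mem_stdSimplex ℝ i

lemma vts_dist (n : ℕ) : ∀ x ∈ vts n, ∀ y ∈ vts n, dist x y ≤ 1 := by
  intro x hx y hy
  rw [dist_pi_le_iff zero_le_one]
  intro i
  exact Real.dist_le_of_mem_Icc_01 (mem_Icc_of_mem_stdSimplex (vts_mem n x hx) i)
    (mem_Icc_of_mem_stdSimplex (vts_mem n y hy) i)

lemma vts_length (n : ℕ) : (vts n).length = n + 1 := by simp [vts]

lemma SDN_vts (N n : ℕ) : SDN K (Fin (n + 1) → ℝ) N (single (vts n) 1) ∈
    Finsupp.supported K K {t | t.length = n + 1 ∧ (∀ x ∈ t, x ∈ stdSimplex ℝ (Fin (n + 1))) ∧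
      ∀ x ∈ t, ∀ y ∈ t, dist x y ≤ (1 - 1 / ((n + 1 : ℕ) : ℝ)) ^ N * 1} := by
  have := SDN_mem (K := K) N (n + 1) (vts n) (vts_length n).le _ (convex_stdSimplex ℝ (Fin (n + 1)))
    (vts_mem n) 1 (vts_dist n)
  rwa [vts_length] at this

lemma SDN_vts' (N n : ℕ) : SDN K (Fin (n + 1) → ℝ) N (single (vts n) 1) ∈
    Finsupp.supported K K {t | ∀ x ∈ t, x ∈ stdSimplex ℝ (Fin (n + 1))} :=
  Finsupp.supported_mono (fun _ h => h.2.1) (SDN_vts N n)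

lemma PhiL_face (F : Y → X) (N n : ℕ) (i : Fin (n + 2)) (σ : Sg Y (n + 1)) :
    psh K (extd (F ∘ σ)) (SDN K (Fin (n + 2) → ℝ) N
      (single (List.ofFn ((fun j : Fin (n + 2) => (Pi.single j 1 : Fin (n + 2) → ℝ)) ∘ i.succAbove)) 1))
    = PhiL K F N n (face i σ) := by
  have e : (List.ofFn ((fun j : Fin (n + 2) => (Pi.single j 1 : Fin (n + 2) → ℝ)) ∘ i.succAbove)) =
      (vts n).map (FunOnFinite.linearMap ℝ ℝ i.succAbove) := by
    rw [vts, List.map_ofFn]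
    congr 1
    funext j
    simp
  rw [e, ← psh_single, SDN_psh, psh_psh]
  refine psh_congr _ _ (stdSimplex ℝ (Fin (n + 1))) ?_ _ (SDN_vts' N n)
  intro x hx
  have h2 : FunOnFinite.linearMap ℝ ℝ i.succAbove x ∈ stdSimplex ℝ (Fin (n + 2)) :=
    (stdSimplex.map i.succAbove ⟨x, hx⟩).2
  rw [Function.comp_apply, extd_of_mem _ _ h2, extd_of_mem _ _ hx]
  rfl

lemma bd_Phi (F : Y → X) (N n : ℕ) (c : Sg Y (n + 1) →₀ K) :
    bd K X (Phi K F N (n + 1) c) = Phi K F N n (dS K Y n c) := by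
  have : (bd K X).comp (Phi K F N (n + 1)) = (Phi K F N n).comp (dS K Y n) := by
    apply lin_ext; intro σ
    simp only [LinearMap.comp_apply, Phi_single, dS_single]
    rw [PhiL, bd_psh, bd_SDN, bd_single, vts, bdL_ofFn, map_sum, map_sum, map_sum]
    refine Finset.sum_congr rfl fun i _ => ?_
    rw [← mul_one ((-1 : K) ^ (i : ℕ)), ← smul_eq_mul, ← Finsupp.smul_single, ← Finsupp.smul_single,
      map_smul, map_smul, map_smul, Phi_single, PhiL_face]
  exact LinearMap.congr_fun this c

lemma bd_Phi_zero (F : Y → X) (N : ℕ) (c : Sg Y 0 →₀ K) :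
    bd K X (Phi K F N 0 c) = aug K Y c • single [] 1 := by
  have : (bd K X).comp (Phi K F N 0) = (LinearMap.toSpanSingleton K _ (single [] 1)).comp (aug K Y) := by
    apply lin_ext; intro σ
    simp only [LinearMap.comp_apply, Phi_single, aug_single]
    rw [PhiL, bd_psh, bd_SDN, bd_single, vts, bdL_ofFn]
    simp [SDN_nil]
  exact LinearMap.congr_fun this c

lemma Phi_small [PseudoMetricSpace X] (F : Y → X) (hF : Continuous F) (n : ℕ) (c : Sg Y n →₀ K)
    {δ : ℝ} (hδ : 0 < δ) : ∀ᶠ N in Filter.atTop, Phi K F N n c ∈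
      Finsupp.supported K K {l : List X | l.length = n + 1 ∧ ∀ x ∈ l, ∀ y ∈ l, dist x y < δ} := by
  have h1 : ∀ σ : Sg Y n, ∀ᶠ N in Filter.atTop, PhiL K F N n σ ∈
      Finsupp.supported K K {l : List X | l.length = n + 1 ∧ ∀ x ∈ l, ∀ y ∈ l, dist x y < δ} := by
    intro σ
    have hu := CompactSpace.uniformContinuous_of_continuous (hF.comp σ.continuous)
    obtain ⟨η, hη, h⟩ := Metric.uniformContinuous_iff.1 hu δ hδ
    have hlim : Filter.Tendsto (fun N : ℕ => (1 - 1 / ((n + 1 : ℕ) : ℝ)) ^ N * 1) Filter.atTop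
        (nhds (0 * 1)) := by
      refine Filter.Tendsto.mul_const _ (tendsto_pow_atTop_nhds_zero_of_lt_one ?_ ?_)
      · rw [sub_nonneg, div_le_one (by positivity)]
        push_cast
        linarith [(Nat.cast_nonneg n : (0 : ℝ) ≤ n)]
      · have : (0 : ℝ) < 1 / ((n + 1 : ℕ) : ℝ) := by positivity
        linarith
    rw [zero_mul] at hlim
    filter_upwards [hlim.eventually (gt_mem_nhds hη)] with N hN
    refine lin_mem ?_ (SDN_vts N n)
    rintro t ⟨ht1, ht2, ht3⟩
    rw [psh_single]
    refine single_mem_supported ?_ _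
    refine ⟨by simp [ht1], ?_⟩
    intro x hx y hy
    obtain ⟨x', hx', rfl⟩ := List.mem_map.1 hx
    obtain ⟨y', hy', rfl⟩ := List.mem_map.1 hy
    rw [extd_of_mem _ _ (ht2 x' hx'), extd_of_mem _ _ (ht2 y' hy')]
    apply h
    exact (ht3 x' hx' y' hy').trans_lt hN
  have h2 : ∀ᶠ N in Filter.atTop, ∀ σ ∈ c.support, PhiL K F N n σ ∈
      Finsupp.supported K K {l : List X | l.length = n + 1 ∧ ∀ x ∈ l, ∀ y ∈ l, dist x y < δ} :=
    (Filter.eventually_all_finset c.support).2 fun σ _ => h1 σ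
  filter_upwards [h2] with N hN
  have hc : c ∈ Finsupp.supported K K (c.support : Set (Sg Y n)) := by
    rw [Finsupp.mem_supported]
  refine lin_mem ?_ hc
  intro σ hσ
  rw [Phi_single]
  exact hN σ hσ

end Sing

section SingEquiv
variable {K : Type} [Field K] {X Y : Type} [TopologicalSpace Y]
variable {Γ : Type} [Monoid Γ] [MulAction Γ Y] [MulAction Γ X] [ContinuousConstSMul Γ Y]

/-- action on singular simplices -/
def sgAct (Γ Y : Type) [TopologicalSpace Y] [Monoid Γ] [MulAction Γ Y] [ContinuousConstSMul Γ Y]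
    (n : ℕ) : Γ →* Function.End (Sg Y n) where
  toFun g := fun σ => ⟨fun p => g • σ p, σ.continuous.const_smul g⟩
  map_one' := by
    funext σ
    ext p
    exact one_smul Γ (σ p)
  map_mul' g h := by
    funext σ
    ext p
    exact mul_smul g h (σ p)

lemma dS_equiv (n : ℕ) (g : Γ) (c : Sg Y (n + 1) →₀ K) :
    dS K Y n (permRep K (sgAct Γ Y (n + 1)) g c) = permRep K (sgAct Γ Y n) g (dS K Y n c) := by
  have : (dS K Y n).comp (permRep K (sgAct Γ Y (n + 1)) g) =
      (permRep K (sgAct Γ Y n) g).comp (dS K Y n) := by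
    apply lin_ext; intro σ
    simp only [LinearMap.comp_apply, permRep_single, dS_single, map_sum]
    rfl
  exact LinearMap.congr_fun this c

lemma aug_equiv (g : Γ) (c : Sg Y 0 →₀ K) :
    aug K Y (permRep K (sgAct Γ Y 0) g c) = aug K Y c := by
  have : (aug K Y).comp (permRep K (sgAct Γ Y 0) g) = aug K Y := by
    apply lin_ext; intro σ
    simp only [LinearMap.comp_apply, permRep_single, aug_single]
  exact LinearMap.congr_fun this c

lemma Phi_equiv (F : Y → X) (hF : ∀ (g : Γ) y, F (g • y) = g • F y) (N n : ℕ) (g : Γ)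
    (c : Sg Y n →₀ K) : Phi K F N n (permRep K (sgAct Γ Y n) g c) =
      permRep K (listAct Γ X) g (Phi K F N n c) := by
  have h0 : permRep K (listAct Γ X) g = psh K (fun x => g • x) := by
    apply lin_ext; intro l
    rw [permRep_single, psh_single]
    rfl
  have : (Phi K F N n).comp (permRep K (sgAct Γ Y n) g) =
      (permRep K (listAct Γ X) g).comp (Phi K F N n) := by
    apply lin_ext; intro σ
    simp only [LinearMap.comp_apply, permRep_single, Phi_single]
    rw [h0, PhiL, PhiL, psh_psh]
    refine psh_congr _ _ (stdSimplex ℝ (Fin (n + 1))) ?_ _ (SDN_vts' N n)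
    intro x hx
    rw [Function.comp_apply, extd_of_mem _ _ hx, extd_of_mem _ _ hx]
    exact hF g _
  exact LinearMap.congr_fun this c

end SingEquiv
end OV

set_option linter.unusedSectionVars false
namespace OV
open Finsupp

section Coeff
variable {Y : Type} [TopologicalSpace Y]

/-- change of coefficients -/
noncomputable def cf {R L M : Type} [Semiring R] [Field L] [Field M] [Module R L] [Module R M]
    (f : L →ₗ[R] M) (Ω : Type) : (Ω →₀ L) →ₗ[R] (Ω →₀ M) := Finsupp.mapRange.linearMap f

lemma cf_single {R L M : Type} [Semiring R] [Field L] [Field M] [Module R L] [Module R M]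
    (f : L →ₗ[R] M) (Ω : Type) (σ : Ω) (r : L) : cf f Ω (single σ r) = single σ (f r) := by
  simp [cf]

lemma neg_one_pow_map {R L M : Type} [Semiring R] [Field L] [Field M] [Module R L] [Module R M]
    (f : L →ₗ[R] M) (i : ℕ) (r : L) : f ((-1) ^ i * r) = (-1) ^ i * f r := by
  rcases neg_one_pow_eq_or L i with h | h <;> rcases Nat.even_or_odd i with h' | h' <;>
    simp [h'.neg_one_pow]

lemma dS_single' {K : Type} [Field K] (n : ℕ) (σ : Sg Y (n + 1)) (r : K) :
    dS K Y n (single σ r) = ∑ i : Fin (n + 2), single (face i σ) ((-1 : K) ^ (i : ℕ) * r) := by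
  simp [dS, Finset.smul_sum, mul_comm]

lemma cf_dS {R L M : Type} [Semiring R] [Field L] [Field M] [Module R L] [Module R M]
    (f : L →ₗ[R] M) (n : ℕ) (z : Sg Y (n + 1) →₀ L) :
    cf f _ (dS L Y n z) = dS M Y n (cf f _ z) := by
  induction z using Finsupp.induction_linear with
  | zero => simp
  | add x y hx hy => rw [map_add, map_add, map_add, map_add, hx, hy]
  | single σ r =>
    have hL := dS_single' (K := L) n σ r
    have hM := dS_single' (K := M) n σ (f r)
    rw [hL, cf_single, hM, map_sum]
    refine Finset.sum_congr rfl fun i _ => ?_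
    rw [cf_single, neg_one_pow_map]

lemma cf_aug {R L M : Type} [Semiring R] [Field L] [Field M] [Module R L] [Module R M]
    (f : L →ₗ[R] M) (z : Sg Y 0 →₀ L) :
    f (aug L Y z) = aug M Y (cf f _ z) := by
  induction z using Finsupp.induction_linear with
  | zero => simp
  | add x y hx hy => rw [map_add, map_add, map_add, map_add, hx, hy]
  | single σ r => rw [cf_single]; simp [aug]

/-- decomposition along a basis -/
lemma cf_decomp {F K : Type} [Field F] [Field K] [Algebra F K] {ι : Type} [Fintype ι]
    (b : Module.Basis ι F K) (Ω : Type) (z : Ω →₀ K) :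
    z = ∑ i, b i • cf (Algebra.linearMap F K) Ω (cf (b.coord i) Ω z) := by
  induction z using Finsupp.induction_linear with
  | zero => simp
  | add x y hx hy =>
    simp only [map_add, smul_add, Finset.sum_add_distrib]
    rw [← hx, ← hy]
  | single σ r =>
    simp only [cf_single, Finsupp.smul_single, smul_eq_mul]
    rw [← Finsupp.single_finsetSum]
    congr 1
    conv_lhs => rw [← b.sum_repr r]
    refine Finset.sum_congr rfl fun i _ => ?_
    rw [Algebra.smul_def, mul_comm]
    rfl

/-- vanishing of reduced homology, concretely -/
def Acyc (F : Type) [Field F] (Y : Type) [TopologicalSpace Y] (k : ℕ) : Prop :=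
  (∀ z : Sg Y 0 →₀ F, aug F Y z = 0 → ∃ w, dS F Y 0 w = z) ∧
  (∀ n, n + 1 ≤ k → ∀ z : Sg Y (n + 1) →₀ F, dS F Y n z = 0 → ∃ w, dS F Y (n + 1) w = z)

lemma Acyc_ext {F K : Type} [Field F] [Field K] [Algebra F K] [FiniteDimensional F K] (k : ℕ)
    (h : Acyc F Y k) : Acyc K Y k := by
  have b := Module.finBasis F K
  constructor
  · intro z hz
    have : ∀ i, ∃ w, dS F Y 0 w = cf (b.coord i) _ z := fun i => h.1 _ (by
      rw [← cf_aug, hz, map_zero])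
    choose w hw using this
    refine ⟨∑ i, b i • cf (Algebra.linearMap F K) _ (w i), ?_⟩
    rw [map_sum]
    conv_rhs => rw [cf_decomp b _ z]
    refine Finset.sum_congr rfl fun i _ => ?_
    rw [map_smul, ← cf_dS, hw]
  · intro n hn z hz
    have : ∀ i, ∃ w, dS F Y (n + 1) w = cf (b.coord i) _ z := fun i => h.2 n hn _ (by
      rw [← cf_dS, hz, map_zero])
    choose w hw using this
    refine ⟨∑ i, b i • cf (Algebra.linearMap F K) _ (w i), ?_⟩
    rw [map_sum]
    conv_rhs => rw [cf_decomp b _ z]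
    refine Finset.sum_congr rfl fun i _ => ?_
    rw [map_smul, ← cf_dS, hw]

end Coeff

section Build
variable {K : Type} [Field K] {Y : Type} [TopologicalSpace Y]
variable {a m : ℕ} [Fact a.Prime] [CharP K a] [Algebra (ZMod a) K]
variable [MulAction (Gam a m) Y] [ContinuousConstSMul (Gam a m) Y]

noncomputable abbrev sact (K Y : Type) [Field K] [TopologicalSpace Y] {a m : ℕ}
    [MulAction (Gam a m) Y] [ContinuousConstSMul (Gam a m) Y] (n : ℕ)
    (b : MonoidAlgebra K (Gam a m)) : Module.End K (Sg Y n →₀ K) :=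
  (permRep K (sgAct (Gam a m) Y n)).asAlgebraHom b

lemma dS_sact (n : ℕ) (b : MonoidAlgebra K (Gam a m)) (c : Sg Y (n + 1) →₀ K) :
    dS K Y n (sact K Y (n + 1) b c) = sact K Y n b (dS K Y n c) :=
  intertwine _ _ (dS K Y n) (fun g v => dS_equiv n g v) b c

lemma aug_xel (α : Fin m → K) (c : Sg Y 0 →₀ K) : aug K Y (sact K Y 0 (xel a α) c) = 0 := by
  rw [xel]
  simp only [sact, map_sum, map_sub, Representation.asAlgebraHom_single, LinearMap.sum_apply,
    LinearMap.sub_apply, LinearMap.smul_apply, map_smul, aug_equiv, sub_self, Finset.sum_const_zero]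

lemma build (hne : Nonempty Y) (k : ℕ) (hA : Acyc K Y k) (α : Fin m → K) (M : ℕ) (hM : M ≤ k + 1) :
    ∃ e : (∀ j, Sg Y j →₀ K), aug K Y (e 0) = 1 ∧
      ∀ j < M, dS K Y j (e (j + 1)) = sact K Y j (xel a α ^ ex a j) (e j) := by
  induction M with
  | zero =>
    obtain ⟨y⟩ := hne
    exact ⟨fun j => single (ContinuousMap.const _ y) 1, by simp, by simp⟩
  | succ M ih =>
    obtain ⟨e, he0, he⟩ := ih (by omega)
    obtain ⟨w, hw⟩ : ∃ w, dS K Y M w = sact K Y M (xel a α ^ ex a M) (e M) := by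
      cases M with
      | zero =>
        apply hA.1
        rw [show ex a 0 = 1 from rfl, pow_one]
        exact aug_xel α _
      | succ M =>
        apply hA.2 M (by omega)
        rw [dS_sact, he M (by omega)]
        change (_ * _ : Module.End K _) _ = 0
        rw [← map_mul, ← pow_add, add_comm, ex_add, xel_pow]
        simp
    refine ⟨Function.update e (M + 1) w, ?_, ?_⟩
    · rw [Function.update_of_ne (by omega)]; exact he0
    · intro j hj
      by_cases h : j = M
      · subst h
        rw [Function.update_self, Function.update_of_ne (by omega)]
        exact hw
      · rw [Function.update_of_ne (by omega), Function.update_of_ne (by omega)]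
        exact he j (by omega)

theorem main_concrete {X : Type} [MetricSpace X] [CompactSpace X] [MulAction (Gam a m) X]
    (hcont : ∀ g : Gam a m, Continuous (fun x : X => g • x)) (k : ℕ)
    (happ : ∀ ε > 0, ∃ π : X → X, (∀ q, dist (π q) q < ε) ∧ ∃ η > 0, ∀ x, ∃ S : Finset X,
      S.card ≤ k + 1 ∧ ∀ y, dist y x < η → π y ∈ S) (α : Fin m → K)
    (hα : LinearIndependent (ZMod a) α)
    (hfree : ∀ x : X, ∃ g : Gam a m, g • x ≠ x)
    (hne : Nonempty Y) (hA : Acyc K Y k)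
    (F : Y → X) (hF : Continuous F) (hFe : ∀ (g : Gam a m) y, F (g • y) = g • F y) : False := by
  have : NeZero a := ⟨(Fact.out : a.Prime).ne_zero⟩
  have : Finite (Gam a m) := inferInstanceAs (Finite (Fin m → ZMod a))
  obtain ⟨e, he0, he⟩ := build (a := a) hne k hA α (k + 1) le_rfl
  refine core hcont k happ α hα hfree ?_
  intro δ hδ
  obtain ⟨δ', hδ', hnear⟩ := near_of_dist (Γ := Gam a m) (X := X) hcont hδ
  have h1 : ∀ᶠ N in Filter.atTop, ∀ j ∈ Finset.range (k + 2), Phi K F N j (e j) ∈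
      Finsupp.supported K K {l : List X | l.length = j + 1 ∧ ∀ x ∈ l, ∀ y ∈ l, dist x y < δ'} :=
    (Filter.eventually_all_finset _).2 fun j _ => Phi_small F hF j (e j) hδ'
  obtain ⟨N, hN⟩ := h1.exists
  refine ⟨fun j => Phi K F N j (e j), ?_, ?_, ?_⟩
  · intro j hj
    refine Finsupp.supported_mono ?_ (hN j (Finset.mem_range.2 (by omega)))
    rintro l ⟨hl1, hl2⟩
    exact ⟨hl1, fun x hx y hy => hnear x y (hl2 x hx y hy)⟩
  · intro j hj
    simp only
    rw [bd_Phi, he j hj]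
    exact intertwine _ _ (Phi K F N j) (fun g v => Phi_equiv F hFe N j g v) _ _
  · simp only
    rw [bd_Phi_zero, he0, one_smul]

end Build
end OV

namespace OV
open Finsupp Opposite

section Extract
variable (R : Type) [Field R] (Y : Type) [TopologicalSpace Y]

/-- the singular chain complex -/
noncomputable abbrev SC : ChainComplex (ModuleCat R) ℕ :=
  (singularChainComplexFunctor R).obj (TopCat.of Y)

/-- chains as the objects of the complex -/
noncomputable def toC (n : ℕ) : (Sg Y n →₀ R) ≃ₗ[R] ((SC R Y).X n) :=
  (Finsupp.domLCongr ((TopCat.of Y).toSSetObjEquiv (op (SimplexCategory.mk n))).symm :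
    (Sg Y n →₀ R) ≃ₗ[R] (((TopCat.toSSet.obj (TopCat.of Y)).obj (op (SimplexCategory.mk n))) →₀ R))

lemma hom_sum_app {M N : ModuleCat R} {ι : Type} [Fintype ι] (c : ι → ℤ) (f : ι → (M ⟶ N)) (x : M) :
    (∑ i, c i • f i).hom x = ∑ i, c i • (f i).hom x := by
  rw [ModuleCat.hom_sum, LinearMap.sum_apply]
  refine Finset.sum_congr rfl fun i _ => ?_
  rw [ModuleCat.hom_zsmul, LinearMap.smul_apply]

lemma toC_d (n : ℕ) (z : Sg Y (n + 1) →₀ R) :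
    (SC R Y).d (n + 1) n (toC R Y (n + 1) z) = toC R Y n (dS R Y n z) := by
  induction z using Finsupp.induction_linear with
  | zero => simp
  | add x y hx hy => simp only [map_add, hx, hy]
  | single σ r =>
    rw [dS_single', map_sum]
    have h : (SC R Y).d (n + 1) n = ∑ i : Fin (n + 2), (-1 : ℤ) ^ (i : ℕ) •
      (ModuleCat.free R).map ((TopCat.toSSet.obj (TopCat.of Y)).δ i) :=
      AlgebraicTopology.AlternatingFaceMapComplex.obj_d_eq _ n
    refine (congrArg (fun f => f.hom (toC R Y (n + 1) (single σ r))) h).trans ?_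
    refine (hom_sum_app R _ _ _).trans ?_
    refine Finset.sum_congr rfl fun i _ => ?_
    have h1 : toC R Y (n + 1) (single σ r) = (single (((TopCat.of Y).toSSetObjEquiv
      (op (SimplexCategory.mk (n + 1)))).symm σ) r :
        ((TopCat.toSSet.obj (TopCat.of Y)).obj (op (SimplexCategory.mk (n + 1)))) →₀ R) := by
      exact Finsupp.domLCongr_single _ _ _
    have h2 : ∀ s, toC R Y n (single (face i σ) s) = (single (((TopCat.of Y).toSSetObjEquiv
      (op (SimplexCategory.mk n))).symm (face i σ)) s :
        ((TopCat.toSSet.obj (TopCat.of Y)).obj (op (SimplexCategory.mk n))) →₀ R) := by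
      intro s
      exact Finsupp.domLCongr_single _ _ _
    refine Eq.trans ?_ (h2 _).symm
    refine (congrArg (fun t => (-1 : ℤ) ^ (i : ℕ) •
      ((ModuleCat.free R).map ((TopCat.toSSet.obj (TopCat.of Y)).δ i)).hom t) h1).trans ?_
    have h3 : (ModuleCat.free R).map ((TopCat.toSSet.obj (TopCat.of Y)).δ i)
      (single (((TopCat.of Y).toSSetObjEquiv (op (SimplexCategory.mk (n + 1)))).symm σ) r :
        ((TopCat.toSSet.obj (TopCat.of Y)).obj (op (SimplexCategory.mk (n + 1)))) →₀ R)
      = (single (((TopCat.of Y).toSSetObjEquiv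
      (op (SimplexCategory.mk n))).symm (face i σ)) r :
        ((TopCat.toSSet.obj (TopCat.of Y)).obj (op (SimplexCategory.mk n))) →₀ R) :=
      Finsupp.mapDomain_single
    refine (congrArg (fun t => (-1 : ℤ) ^ (i : ℕ) • t) h3).trans ?_
    refine (Finsupp.smul_single _ _ _).trans ?_
    congr 1
    simp

/-- the complex of a point -/
noncomputable def pointIso : SC R PUnit ≅
    ChainComplex.alternatingConst.obj ((ModuleCat.free R).obj PUnit) :=
  (AlgebraicTopology.alternatingFaceMapComplex _).mapIso
    (((SimplicialObject.whiskering _ _).obj _).mapIso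
    (TopCat.toSSetIsoConst (TopCat.of PUnit)) ≪≫ Functor.constComp _ _ _) ≪≫
    AlgebraicTopology.alternatingFaceMapComplexConst.app _

lemma point_zero (n : ℕ) (hn : n ≠ 0) : Limits.IsZero (singularHomology R n PUnit) :=
  ((ChainComplex.alternatingConst_exactAt _ _ hn).of_iso (pointIso R).symm).isZero_homology

lemma point_H0 : Nonempty (singularHomology R 0 PUnit ≅ (ModuleCat.free R).obj PUnit) :=
  ⟨(HomologicalComplex.homologyFunctor _ _ 0).mapIso (pointIso R) ≪≫
    ChainComplex.alternatingConstHomologyZero _⟩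

lemma point_finrank : Module.finrank R (singularHomology R 0 PUnit) = 1 := by
  obtain ⟨e⟩ := point_H0 R
  rw [e.toLinearEquiv.finrank_eq]
  change Module.finrank R (PUnit →₀ R) = 1
  simp

variable {R Y}
lemma extract_pos (n : ℕ) (h : Nonempty (singularHomology R (n + 1) Y ≅
    singularHomology R (n + 1) PUnit)) (z : Sg Y (n + 1) →₀ R) (hz : dS R Y n z = 0) :
    ∃ w, dS R Y (n + 1) w = z := by
  obtain ⟨e⟩ := h
  have h0 : Limits.IsZero ((SC R Y).homology (n + 1)) := (point_zero R (n + 1) (by omega)).of_iso e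
  rw [← HomologicalComplex.exactAt_iff_isZero_homology,
    HomologicalComplex.exactAt_iff' _ (n + 2) (n + 1) n (by simp) (by simp),
    ShortComplex.moduleCat_exact_iff] at h0
  obtain ⟨w, hw⟩ : ∃ w : (SC R Y).X (n + 2), (SC R Y).d (n + 2) (n + 1) w = toC R Y (n + 1) z :=
    h0 (toC R Y (n + 1) z) (by
      have := toC_d R Y n z
      rw [hz, map_zero] at this
      exact this)
  refine ⟨(toC R Y (n + 2)).symm w, (toC R Y (n + 1)).injective ?_⟩
  rw [← toC_d, LinearEquiv.apply_symm_apply]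
  exact hw

lemma aug_dS (z : Sg Y 1 →₀ R) : aug R Y (dS R Y 0 z) = 0 := by
  induction z using Finsupp.induction_linear with
  | zero => simp
  | add x y hx hy => simp only [map_add, hx, hy, add_zero]
  | single σ r => 
    rw [dS_single', map_sum, Fin.sum_univ_two]
    simp only [aug, Finsupp.linearCombination_single]
    simp

lemma extract_zero [Nonempty Y] (h : Nonempty (singularHomology R 0 Y ≅
    singularHomology R 0 PUnit)) (z : Sg Y 0 →₀ R) (hz : aug R Y z = 0) :
    ∃ w, dS R Y 0 w = z := by
  obtain ⟨e⟩ := h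
  let C := SC R Y
  have i1 : IsIso (C.homologyι 0) := ChainComplex.isIso_homologyι₀ C
  have hfr : Module.finrank R (C.opcycles 0) = 1 := by
    rw [← (asIso (C.homologyι 0)).toLinearEquiv.finrank_eq, ← point_finrank R]
    exact e.toLinearEquiv.finrank_eq
  let A : C.X 0 ⟶ ModuleCat.of R R := ModuleCat.ofHom (aug R Y ∘ₗ (toC R Y 0).symm.toLinearMap)
  have hA : C.d 1 0 ≫ A = 0 := by
    ext w
    obtain ⟨w, rfl⟩ := (toC R Y 1).surjective w
    change aug R Y ((toC R Y 0).symm (C.d 1 0 (toC R Y 1 w))) = 0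
    rw [toC_d, LinearEquiv.symm_apply_apply, aug_dS]
  let B : C.opcycles 0 ⟶ ModuleCat.of R R := C.descOpcycles A 1 (by simp) hA
  have hAB : C.pOpcycles 0 ≫ B = A := C.p_descOpcycles _ _ _ _
  have hB : Function.Surjective B.hom := by
    refine LinearMap.surjective ?_
    intro h0
    have := congrArg (fun f => f (toC R Y 0 (single (ContinuousMap.const _ (Classical.arbitrary Y)) 1)))
      (congrArg ModuleCat.Hom.hom hAB)
    have h1 : A.hom (toC R Y 0 (single (ContinuousMap.const _ (Classical.arbitrary Y)) 1)) = 1 := by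
      change aug R Y ((toC R Y 0).symm _) = 1
      rw [LinearEquiv.symm_apply_apply, aug_single]
    simp only [ModuleCat.hom_comp, h0, LinearMap.zero_comp, LinearMap.zero_apply] at this
    rw [h1] at this
    exact zero_ne_one this
  have : Module.Finite R (C.opcycles 0) := Module.finite_of_finrank_eq_succ hfr
  have hBi : Function.Injective B.hom :=
    (LinearMap.injective_iff_surjective_of_finrank_eq_finrank
      (by rw [hfr]; exact (Module.finrank_self R).symm)).2 hB
  have hp : C.pOpcycles 0 (toC R Y 0 z) = 0 := by
    apply hBi
    have := congrArg (fun f => f (toC R Y 0 z)) (congrArg ModuleCat.Hom.hom hAB)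
    have h1 : A.hom (toC R Y 0 z) = 0 := by
      change aug R Y ((toC R Y 0).symm _) = 0
      rw [LinearEquiv.symm_apply_apply, hz]
    rw [map_zero, ← h1]
    exact this
  let S : ShortComplex (ModuleCat R) := ShortComplex.mk (C.d 1 0) (C.pOpcycles 0) (by simp)
  have hS : S.Exact := S.exact_of_g_is_cokernel (C.opcyclesIsCokernel 1 0 (by simp))
  rw [ShortComplex.moduleCat_exact_iff] at hS
  obtain ⟨w, hw⟩ := hS (toC R Y 0 z) hp
  refine ⟨(toC R Y 1).symm w, (toC R Y 0).injective ?_⟩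
  rw [← toC_d, LinearEquiv.apply_symm_apply]
  exact hw

end Extract

lemma acyc_of (a : ℕ) [Fact a.Prime] (Y : Type) [TopologicalSpace Y] (k : ℕ)
    (h : IsAcyclicSpace a Y k) : Acyc (ZMod a) Y k := by
  obtain ⟨h0, h1⟩ := h
  exact ⟨fun z hz => extract_zero (h1 0 (by simp)) z hz,
    fun n hn z hz => extract_pos n (h1 (n + 1) (by exact_mod_cast hn)) z hz⟩
end OV

/-!
STATEMENT 5 (Özaydin–Volovikov lemma).
Let `a` be a prime, `G = (ℤ/a)^m`, and `k ≥ 0`. Suppose `G` acts continuously and without fixed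
points on a space `Y` and on the sphere `S^k` (the unit sphere of `ℝ^{k+1}`), and `Y` is
`k`-acyclic with `ℤ/a` coefficients. Then there is no `G`-equivariant continuous map `Y → S^k`.
An action of the (additive) group `G` is encoded as a family of continuous maps `act g`
satisfying the action laws; it is fixed-point free if no point is fixed by every `g ∈ G`.
-/
theorem ozaydin_volovikov
    (a m k : ℕ) (ha : a.Prime)
    (Y : Type) [TopologicalSpace Y]
    (actY : (Fin m → ZMod a) → Y → Y)
    (hYcont : ∀ g, Continuous (actY g))
    (hYone : ∀ y, actY 0 y = y)
    (hYmul : ∀ g h y, actY (g + h) y = actY g (actY h y))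
    (hYfree : ∀ y, ∃ g, actY g y ≠ y)
    (actS : (Fin m → ZMod a) →
      (Metric.sphere (0 : EuclideanSpace ℝ (Fin (k + 1))) 1 : Set _) →
      (Metric.sphere (0 : EuclideanSpace ℝ (Fin (k + 1))) 1 : Set _))
    (hScont : ∀ g, Continuous (actS g))
    (hSone : ∀ y, actS 0 y = y)
    (hSmul : ∀ g h y, actS (g + h) y = actS g (actS h y))
    (hSfree : ∀ y, ∃ g, actS g y ≠ y)
    (hacyc : IsAcyclicSpace a Y k) :
    ¬ ∃ F : Y → (Metric.sphere (0 : EuclideanSpace ℝ (Fin (k + 1))) 1 : Set _),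
        Continuous F ∧ ∀ g y, F (actY g y) = actS g (F y) := by
  rintro ⟨F, hF, hFe⟩
  have hfact : Fact a.Prime := ⟨ha⟩
  have hA := OV.acyc_of a Y k hacyc
  have hne : Nonempty Y := hacyc.1
  have hm : m ≠ 0 := by
    rintro rfl
    obtain ⟨y⟩ := hne
    obtain ⟨g, hg⟩ := hYfree y
    exact hg (by rw [Subsingleton.elim g 0, hYone])
  letI mY : MulAction (OV.Gam a m) Y :=
    { smul := fun g y => actY (Multiplicative.toAdd g) y
      one_smul := fun y => hYone y
      mul_smul := fun g h y => hYmul _ _ y }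
  letI mS : MulAction (OV.Gam a m) (Metric.sphere (0 : EuclideanSpace ℝ (Fin (k + 1))) 1) :=
    { smul := fun g y => actS (Multiplicative.toAdd g) y
      one_smul := fun y => hSone y
      mul_smul := fun g h y => hSmul _ _ y }
  haveI : ContinuousConstSMul (OV.Gam a m) Y := ⟨fun g => hYcont (Multiplicative.toAdd g)⟩
  have hfr : Module.finrank (ZMod a) (GaloisField a m) = m := GaloisField.finrank a hm
  haveI : Module.Finite (ZMod a) (GaloisField a m) :=
    Module.finite_of_finrank_pos (by rw [hfr]; omega)
  have b : Module.Basis (Fin m) (ZMod a) (GaloisField a m) :=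
    Module.finBasisOfFinrankEq _ _ hfr
  refine OV.main_concrete (K := GaloisField a m) (a := a) (m := m) (Y := Y)
    (X := Metric.sphere (0 : EuclideanSpace ℝ (Fin (k + 1))) 1)
    (fun g => hScont (Multiplicative.toAdd g)) k (OV.sphere_approx k) b b.linearIndependent
    ?_ hne (OV.Acyc_ext k hA) F hF (fun g y => hFe _ _)
  intro x
  obtain ⟨g, hg⟩ := hSfree x
  exact ⟨Multiplicative.ofAdd g, hg⟩
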